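/- Let a, b, k be positive integers with gcd(a,b)=1 and 0 ≤ k ≤ a < b. Then the rational q-Schröder polynomial C(k, a−k, b−k; q) = (1/[a+b−k]_q) · [a+b−k choose k, a−k, b−k]_q is parity-unimodal: writing C(k,a−k,b−k;q) = Σ_i a_i q^i, both subsequences (a_0, a_2, a_4, …) and (a_1, a_3, a_5, …) are unimodal. -/

import Mathlib

open Polynomial in
/-- The q-analogue `[n]_q = 1 + q + ⋯ + q^{n-1}` as a polynomial in `ℤ[q]`. -/
noncomputable def qInt (n : ℕ) : Polynomial ℤ := ∑ i ∈ Finset.range n, X ^ i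

/-- The q-factorial `[n]!_q = [n]_q [n-1]_q ⋯ [1]_q`. -/
noncomputable def qFactorial : ℕ → Polynomial ℤ
  | 0 => 1
  | n + 1 => qInt (n + 1) * qFactorial n

/-- A sequence is unimodal if it weakly increases then weakly decreases. -/
def UnimodalSeq (f : ℕ → ℤ) : Prop :=
  ∃ m : ℕ, (∀ i j : ℕ, i ≤ j → j ≤ m → f i ≤ f j) ∧ (∀ i j : ℕ, m ≤ i → i ≤ j → f j ≤ f i)

/-- A polynomial is parity-unimodal if its even-indexed and odd-indexed coefficient
sequences are each unimodal. -/
def ParityUnimodal (P : Polynomial ℤ) : Prop :=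
  UnimodalSeq (fun i => P.coeff (2 * i)) ∧ UnimodalSeq (fun i => P.coeff (2 * i + 1))

section QuotientOfPolynomialRing

open MvPolynomial

section Hilbert

variable {σ : Type*}

/-- An ideal closed under taking homogeneous components. -/
def HomogIdeal (J : Ideal (MvPolynomial σ ℂ)) : Prop :=
  ∀ p ∈ J, ∀ n, homogeneousComponent n p ∈ J

/-- The degree `d` part of an ideal. -/
noncomputable def gradedPiece (J : Ideal (MvPolynomial σ ℂ)) (d : ℕ) :
    Submodule ℂ (MvPolynomial σ ℂ) :=
  J.restrictScalars ℂ ⊓ homogeneousSubmodule σ ℂ d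

theorem mem_gradedPiece {J : Ideal (MvPolynomial σ ℂ)} {d : ℕ} {p : MvPolynomial σ ℂ} :
    p ∈ gradedPiece J d ↔ p ∈ J ∧ p.IsHomogeneous d := Iff.rfl

theorem homogeneousComponent_mul_of_isHomogeneous {f : MvPolynomial σ ℂ} {e : ℕ}
    (hf : f.IsHomogeneous e) (u : MvPolynomial σ ℂ) (d : ℕ) :
    homogeneousComponent (d + e) (f * u) = f * homogeneousComponent d u := by
  conv_lhs => rw [← sum_homogeneousComponent u, Finset.mul_sum, map_sum]
  have h : ∀ n, homogeneousComponent (d + e) (f * homogeneousComponent n u) =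
      if n = d then f * homogeneousComponent n u else 0 := by
    intro n
    have h1 : (f * homogeneousComponent n u).IsHomogeneous (e + n) :=
      hf.mul (homogeneousComponent_isHomogeneous n u)
    rw [homogeneousComponent_of_mem h1]
    congr 1
    apply propext
    omega
  simp_rw [h]
  rw [Finset.sum_ite_eq']
  split_ifs with h2
  · rfl
  · rw [homogeneousComponent_eq_zero, mul_zero]
    simpa using h2

section
attribute [local instance] MvPolynomial.gradedAlgebra

theorem homogIdeal_span {s : Set (MvPolynomial σ ℂ)} (hs : ∀ f ∈ s, ∃ e, f.IsHomogeneous e) :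
    HomogIdeal (Ideal.span s) := fun _ hp n =>
  homogeneousComponent_mem_of_mem
    (Ideal.homogeneous_span (homogeneousSubmodule σ ℂ) s fun f hf => hs f hf) hp n

end

/-- The ideal of all `u` with `f * u ∈ J`. -/
noncomputable def colonBy (J : Ideal (MvPolynomial σ ℂ)) (f : MvPolynomial σ ℂ) :
    Ideal (MvPolynomial σ ℂ) :=
  Submodule.comap (LinearMap.mulLeft (MvPolynomial σ ℂ) f) J

theorem mem_colonBy {J : Ideal (MvPolynomial σ ℂ)} {f u : MvPolynomial σ ℂ} :
    u ∈ colonBy J f ↔ f * u ∈ J := Iff.rfl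

theorem le_colonBy (J : Ideal (MvPolynomial σ ℂ)) (f : MvPolynomial σ ℂ) : J ≤ colonBy J f :=
  fun _ hu => J.mul_mem_left f hu

theorem HomogIdeal.colonBy {J : Ideal (MvPolynomial σ ℂ)} (hJ : HomogIdeal J)
    {f : MvPolynomial σ ℂ} {e : ℕ} (hf : f.IsHomogeneous e) : HomogIdeal (colonBy J f) := by
  intro u hu n
  rw [mem_colonBy, ← homogeneousComponent_mul_of_isHomogeneous hf]
  exact hJ _ hu _

theorem HomogIdeal.le_of_gradedPiece_le {I J : Ideal (MvPolynomial σ ℂ)} (hI : HomogIdeal I)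
    (h : ∀ d, gradedPiece I d ≤ gradedPiece J d) : I ≤ J := by
  intro p hp
  rw [← sum_homogeneousComponent p]
  exact J.sum_mem fun n _ => (h n ⟨hI p hp n, homogeneousComponent_isHomogeneous n p⟩).1

/-- The degree `d + e` part of `J + (f)`, when `f` has degree `e`. -/
theorem gradedPiece_sup_span_add {J : Ideal (MvPolynomial σ ℂ)} (hJ : HomogIdeal J)
    {f : MvPolynomial σ ℂ} {e : ℕ} (hf : f.IsHomogeneous e) (d : ℕ) :
    gradedPiece (J ⊔ Ideal.span {f}) (d + e) =
      gradedPiece J (d + e) ⊔ (homogeneousSubmodule σ ℂ d).map (LinearMap.mulLeft ℂ f) := by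
  apply le_antisymm
  · rintro p ⟨hp, hpd⟩
    obtain ⟨x, hx, y, hy, rfl⟩ := Submodule.mem_sup.1 hp
    obtain ⟨u, rfl⟩ := Ideal.mem_span_singleton'.1 hy
    have h := homogeneousComponent_of_mem (m := d + e) hpd
    rw [if_pos rfl, map_add, mul_comm u, homogeneousComponent_mul_of_isHomogeneous hf] at h
    rw [mul_comm u, ← h]
    exact Submodule.add_mem_sup ⟨hJ x hx _, homogeneousComponent_isHomogeneous _ _⟩
      ⟨_, homogeneousComponent_isHomogeneous d u, rfl⟩
  · refine sup_le (fun p hp => ⟨Ideal.mem_sup_left hp.1, hp.2⟩) ?_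
    rintro _ ⟨u, hu, rfl⟩
    refine ⟨Ideal.mem_sup_right (Ideal.mul_mem_right _ _ (Ideal.mem_span_singleton_self f)), ?_⟩
    rw [add_comm]
    exact hf.mul hu

theorem gradedPiece_sup_span_of_lt {J : Ideal (MvPolynomial σ ℂ)} (hJ : HomogIdeal J)
    {f : MvPolynomial σ ℂ} {e : ℕ} (hf : f.IsHomogeneous e) {d : ℕ} (hd : d < e) :
    gradedPiece (J ⊔ Ideal.span {f}) d = gradedPiece J d := by
  apply le_antisymm
  · rintro p ⟨hp, hpd⟩
    obtain ⟨x, hx, y, hy, rfl⟩ := Submodule.mem_sup.1 hp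
    obtain ⟨u, rfl⟩ := Ideal.mem_span_singleton'.1 hy
    have h := homogeneousComponent_of_mem (m := d) hpd
    have h2 : homogeneousComponent d (u * f) = 0 := by
      rw [← sum_homogeneousComponent u, Finset.sum_mul, map_sum]
      refine Finset.sum_eq_zero fun n _ => ?_
      rw [homogeneousComponent_of_mem ((homogeneousComponent_isHomogeneous n u).mul hf),
        if_neg (by omega)]
    rw [if_pos rfl, map_add, h2, add_zero] at h
    rw [← h]
    exact ⟨hJ x hx _, homogeneousComponent_isHomogeneous _ _⟩
  · exact fun p hp => ⟨Ideal.mem_sup_left hp.1, hp.2⟩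

theorem finrank_map_add_finrank_inf_ker {V W : Type*} [AddCommGroup V] [Module ℂ V]
    [AddCommGroup W] [Module ℂ W] (f : V →ₗ[ℂ] W) (S : Submodule ℂ V) [FiniteDimensional ℂ S] :
    Module.finrank ℂ (S.map f) + Module.finrank ℂ (S ⊓ LinearMap.ker f : Submodule ℂ V) =
      Module.finrank ℂ S := by
  have h := LinearMap.finrank_range_add_finrank_ker (f.domRestrict S)
  rw [LinearMap.range_domRestrict] at h
  rw [← h, ← Submodule.map_comap_subtype, Submodule.finrank_map_subtype_eq]
  rfl

theorem homogIdeal_span_image {ι : Type*} {f : ι → MvPolynomial σ ℂ} {e : ι → ℕ}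
    (hf : ∀ i, (f i).IsHomogeneous (e i)) (s : Set ι) :
    HomogIdeal (Ideal.span (f '' s)) :=
  homogIdeal_span <| by
    rintro _ ⟨i, -, rfl⟩
    exact ⟨e i, hf i⟩

theorem span_image_insert {ι : Type*} (f : ι → MvPolynomial σ ℂ) (i : ι) (s : Set ι) :
    Ideal.span (f '' insert i s) = Ideal.span (f '' s) ⊔ Ideal.span {f i} := by
  rw [Set.image_insert_eq, Ideal.span_insert, sup_comm]

theorem span_range_eq_sup {ι : Type*} [Fintype ι] [DecidableEq ι] (f : ι → MvPolynomial σ ℂ)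
    (i : ι) :
    Ideal.span (Set.range f) =
      Ideal.span (f '' (Finset.univ.erase i : Finset ι)) ⊔ Ideal.span {f i} := by
  rw [← span_image_insert, ← Finset.coe_insert, Finset.insert_erase (Finset.mem_univ i)]
  simp

variable [Finite σ]

instance (d : ℕ) : FiniteDimensional ℂ (homogeneousSubmodule σ ℂ d) :=
  Module.Finite.iff_fg.2 (homogeneousSubmodule_fg σ ℂ d)

instance (J : Ideal (MvPolynomial σ ℂ)) (d : ℕ) : FiniteDimensional ℂ (gradedPiece J d) :=
  Submodule.finiteDimensional_of_le inf_le_right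

/-- The dimension of the degree `d` part of an ideal. -/
noncomputable def pieceDim (J : Ideal (MvPolynomial σ ℂ)) (d : ℕ) : ℕ :=
  Module.finrank ℂ (gradedPiece J d)

theorem pieceDim_mono {I J : Ideal (MvPolynomial σ ℂ)} (h : I ≤ J) (d : ℕ) :
    pieceDim I d ≤ pieceDim J d :=
  Submodule.finrank_mono fun _ hp => ⟨h hp.1, hp.2⟩

theorem HomogIdeal.eq_of_pieceDim_eq {I J : Ideal (MvPolynomial σ ℂ)} (hJ : HomogIdeal J)
    (hIJ : I ≤ J) (h : ∀ d, pieceDim I d = pieceDim J d) : I = J :=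
  le_antisymm hIJ <| hJ.le_of_gradedPiece_le fun d => by
    have h1 : gradedPiece I d ≤ gradedPiece J d := fun _ hp => ⟨hIJ hp.1, hp.2⟩
    exact (Submodule.eq_of_le_of_finrank_eq h1 (h d)).ge

theorem pieceDim_sup_span_add {J : Ideal (MvPolynomial σ ℂ)} (hJ : HomogIdeal J)
    {f : MvPolynomial σ ℂ} {e : ℕ} (hf : f.IsHomogeneous e) (d : ℕ) :
    pieceDim (J ⊔ Ideal.span {f}) (d + e) + pieceDim (colonBy J f) d =
      pieceDim J (d + e) + pieceDim (⊤ : Ideal (MvPolynomial σ ℂ)) d := by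
  have htop : gradedPiece (⊤ : Ideal (MvPolynomial σ ℂ)) d = homogeneousSubmodule σ ℂ d := by
    ext p
    simp [mem_gradedPiece]
  unfold pieceDim
  rw [gradedPiece_sup_span_add hJ hf, htop]
  set V := homogeneousSubmodule σ ℂ d
  set m := LinearMap.mulLeft ℂ f
  have h1 := Submodule.finrank_sup_add_finrank_inf_eq (gradedPiece J (d + e)) (V.map m)
  have h2 : gradedPiece J (d + e) ⊓ V.map m = (gradedPiece (colonBy J f) d).map m := by
    ext p
    constructor
    · rintro ⟨hp, u, hu, rfl⟩
      exact ⟨u, ⟨hp.1, hu⟩, rfl⟩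
    · rintro ⟨u, hu, rfl⟩
      refine ⟨⟨hu.1, ?_⟩, u, hu.2, rfl⟩
      rw [add_comm]
      exact hf.mul hu.2
  have h3 : gradedPiece (colonBy J f) d ⊓ LinearMap.ker m = V ⊓ LinearMap.ker m := by
    ext p
    constructor
    · rintro ⟨hp, hm⟩
      exact ⟨hp.2, hm⟩
    · rintro ⟨hp, hm⟩
      refine ⟨⟨?_, hp⟩, hm⟩
      have : f * p = 0 := hm
      change f * p ∈ J
      rw [this]
      exact J.zero_mem
  have h4 := finrank_map_add_finrank_inf_ker m V
  have h5 := finrank_map_add_finrank_inf_ker m (gradedPiece (colonBy J f) d)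
  rw [h2] at h1
  rw [h3] at h5
  omega

/-- The Hilbert series of the quotient by an ideal. -/
noncomputable def hilb (J : Ideal (MvPolynomial σ ℂ)) : PowerSeries ℤ :=
  PowerSeries.mk fun d => (pieceDim (⊤ : Ideal (MvPolynomial σ ℂ)) d : ℤ) - pieceDim J d

theorem hilb_sup_span {J : Ideal (MvPolynomial σ ℂ)} (hJ : HomogIdeal J)
    {f : MvPolynomial σ ℂ} {e : ℕ} (hf : f.IsHomogeneous e) :
    hilb (J ⊔ Ideal.span {f}) = hilb J - PowerSeries.X ^ e * hilb (colonBy J f) := by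
  ext d
  rw [map_sub, PowerSeries.coeff_X_pow_mul']
  simp only [hilb, PowerSeries.coeff_mk]
  split_ifs with h
  · obtain ⟨d, rfl⟩ := Nat.exists_eq_add_of_le' h
    have := pieceDim_sup_span_add hJ hf d
    rw [Nat.add_sub_cancel]
    omega
  · rw [sub_zero, pieceDim, pieceDim, pieceDim, gradedPiece_sup_span_of_lt hJ hf (not_le.1 h)]

theorem hilb_sup_span_of_colonBy_eq {J : Ideal (MvPolynomial σ ℂ)} (hJ : HomogIdeal J)
    {f : MvPolynomial σ ℂ} {e : ℕ} (hf : f.IsHomogeneous e) (h : colonBy J f = J) :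
    hilb (J ⊔ Ideal.span {f}) = (1 - PowerSeries.X ^ e) * hilb J := by
  rw [hilb_sup_span hJ hf, h]
  ring

/-- A power series that is zero or has positive lowest coefficient. -/
def LexNonneg (p : PowerSeries ℤ) : Prop :=
  p = 0 ∨ ∃ n, (∀ m < n, PowerSeries.coeff m p = 0) ∧ 0 < PowerSeries.coeff n p

theorem LexNonneg.of_coeff_nonneg {p : PowerSeries ℤ} (h : ∀ n, 0 ≤ PowerSeries.coeff n p) :
    LexNonneg p := by
  classical
  by_cases h0 : ∃ n, PowerSeries.coeff n p ≠ 0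
  · refine Or.inr ⟨Nat.find h0, fun m hm => not_not.1 (Nat.find_min h0 hm), ?_⟩
    exact lt_of_le_of_ne (h _) (Nat.find_spec h0).symm
  · push Not at h0
    exact Or.inl (PowerSeries.ext fun n => by simp [h0 n])

theorem LexNonneg.eq_zero_of_coeff_nonpos {p : PowerSeries ℤ} (hp : LexNonneg p)
    (h : ∀ n, PowerSeries.coeff n p ≤ 0) : p = 0 := by
  rcases hp with hp | ⟨n, -, hn⟩
  · exact hp
  · exact absurd (h n) (not_le.2 hn)

theorem LexNonneg.add {p q : PowerSeries ℤ} (hp : LexNonneg p) (hq : LexNonneg q) :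
    LexNonneg (p + q) ∧ (p + q = 0 → p = 0 ∧ q = 0) := by
  rcases hp with rfl | ⟨n, hn, hn'⟩
  · simpa using hq
  rcases hq with rfl | ⟨m, hm, hm'⟩
  · simp only [add_zero]
    exact ⟨Or.inr ⟨n, hn, hn'⟩, fun h => ⟨h, trivial⟩⟩
  have key : ∃ l, (∀ m < l, PowerSeries.coeff m (p + q) = 0) ∧
      0 < PowerSeries.coeff l (p + q) := by
    rcases lt_trichotomy n m with h | h | h
    · refine ⟨n, fun l hl => by rw [map_add, hn l hl, hm l (hl.trans h), add_zero], ?_⟩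
      rwa [map_add, hm n h, add_zero]
    · subst h
      refine ⟨n, fun l hl => by rw [map_add, hn l hl, hm l hl, add_zero], ?_⟩
      rw [map_add]
      exact add_pos hn' hm'
    · refine ⟨m, fun l hl => by rw [map_add, hn l (hl.trans h), hm l hl, add_zero], ?_⟩
      rwa [map_add, hn m h, zero_add]
  refine ⟨Or.inr key, fun h => ?_⟩
  obtain ⟨l, -, hl⟩ := key
  simp [h] at hl

theorem LexNonneg.one_sub_X_pow_mul {p : PowerSeries ℤ} (hp : LexNonneg p) {e : ℕ} (he : 0 < e) :
    LexNonneg ((1 - PowerSeries.X ^ e) * p) := by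
  rcases hp with rfl | ⟨n, hn, hn'⟩
  · exact Or.inl (mul_zero _)
  refine Or.inr ⟨n, fun m hm => ?_, ?_⟩
  · rw [sub_mul, one_mul, map_sub, PowerSeries.coeff_X_pow_mul', hn m hm]
    split_ifs
    · rw [hn _ (by omega), sub_zero]
    · simp
  · rw [sub_mul, one_mul, map_sub, PowerSeries.coeff_X_pow_mul']
    split_ifs with h
    · rwa [hn (n - e) (by omega), sub_zero]
    · simpa using hn'

theorem one_sub_X_pow_ne_zero {e : ℕ} (he : 0 < e) :
    (1 - PowerSeries.X ^ e : PowerSeries ℤ) ≠ 0 := by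
  intro h
  have := congrArg PowerSeries.constantCoeff h
  simp [he.ne'] at this

section Family

variable {ι : Type*} {f : ι → MvPolynomial σ ℂ} {e : ι → ℕ}

theorem LexNonneg.hilb_sub_hilb {I J : Ideal (MvPolynomial σ ℂ)} (h : I ≤ J) :
    LexNonneg (hilb I - hilb J) := by
  refine .of_coeff_nonneg fun n => ?_
  have := pieceDim_mono h n
  simp only [hilb, map_sub, PowerSeries.coeff_mk]
  omega

theorem LexNonneg.X_pow_mul {p : PowerSeries ℤ} (hp : LexNonneg p) (e : ℕ) :
    LexNonneg (PowerSeries.X ^ e * p) := by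
  rcases hp with rfl | ⟨n, hn, hn'⟩
  · exact Or.inl (mul_zero _)
  refine Or.inr ⟨n + e, fun m hm => ?_, by simpa [PowerSeries.coeff_X_pow_mul]⟩
  rw [PowerSeries.coeff_X_pow_mul']
  split_ifs
  · exact hn _ (by omega)
  · rfl

theorem lexNonneg_hilb_insert {J : Ideal (MvPolynomial σ ℂ)} (hJ : HomogIdeal J)
    {g : MvPolynomial σ ℂ} {d : ℕ} (hg : g.IsHomogeneous d) (hd : 0 < d) {p : PowerSeries ℤ}
    (hp : LexNonneg (hilb J - p)) :
    LexNonneg (hilb (J ⊔ Ideal.span {g}) - (1 - PowerSeries.X ^ d) * p) ∧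
      (hilb (J ⊔ Ideal.span {g}) = (1 - PowerSeries.X ^ d) * p →
        hilb J = p ∧ colonBy J g = J) := by
  have h : hilb (J ⊔ Ideal.span {g}) - (1 - PowerSeries.X ^ d) * p =
      (1 - PowerSeries.X ^ d) * (hilb J - p) +
        PowerSeries.X ^ d * (hilb J - hilb (colonBy J g)) := by
    rw [hilb_sup_span hJ hg]
    ring
  have h1 := (hp.one_sub_X_pow_mul hd).add
    ((LexNonneg.hilb_sub_hilb (le_colonBy J g)).X_pow_mul d)
  rw [← h] at h1
  refine ⟨h1.1, fun h2 => ?_⟩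
  obtain ⟨h3, h4⟩ := h1.2 (sub_eq_zero.2 h2)
  refine ⟨sub_eq_zero.1 ((mul_eq_zero.1 h3).resolve_left (one_sub_X_pow_ne_zero hd)), ?_⟩
  have h5 := (mul_eq_zero.1 h4).resolve_left (pow_ne_zero _ PowerSeries.X_ne_zero)
  refine ((hJ.colonBy hg).eq_of_pieceDim_eq (le_colonBy J g) fun n => ?_).symm
  have := congrArg (PowerSeries.coeff n) h5
  simp only [hilb, map_sub, PowerSeries.coeff_mk, map_zero] at this
  omega

theorem lexNonneg_hilb_span (hf : ∀ i, (f i).IsHomogeneous (e i)) (he : ∀ i, 0 < e i)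
    (T : Finset ι) :
    LexNonneg (hilb (Ideal.span (f '' T)) -
      (∏ i ∈ T, (1 - PowerSeries.X ^ e i)) * hilb (⊥ : Ideal (MvPolynomial σ ℂ))) := by
  classical
  induction T using Finset.induction_on with
  | empty => exact Or.inl (by simp)
  | insert i T hi ih =>
    rw [Finset.coe_insert, span_image_insert, Finset.prod_insert hi, mul_assoc]
    exact (lexNonneg_hilb_insert (homogIdeal_span_image hf _) (hf i) (he i) ih).1

variable [Fintype ι]

/-- A family of forms of degrees `e` is a complete intersection if the quotient by it has the
smallest possible Hilbert series. -/
def IsCI (f : ι → MvPolynomial σ ℂ) (e : ι → ℕ) : Prop :=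
  hilb (Ideal.span (Set.range f)) =
    (∏ i, (1 - PowerSeries.X ^ e i)) * hilb (⊥ : Ideal (MvPolynomial σ ℂ))

theorem lexNonneg_hilb_range (hf : ∀ i, (f i).IsHomogeneous (e i)) (he : ∀ i, 0 < e i) :
    LexNonneg (hilb (Ideal.span (Set.range f)) -
      (∏ i, (1 - PowerSeries.X ^ e i)) * hilb (⊥ : Ideal (MvPolynomial σ ℂ))) := by
  simpa using lexNonneg_hilb_span hf he Finset.univ

variable [DecidableEq ι]

theorem IsCI.erase (hf : ∀ i, (f i).IsHomogeneous (e i)) (he : ∀ i, 0 < e i) (h : IsCI f e)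
    (i : ι) :
    hilb (Ideal.span (f '' (Finset.univ.erase i : Finset ι))) =
        (∏ j ∈ Finset.univ.erase i, (1 - PowerSeries.X ^ e j)) *
          hilb (⊥ : Ideal (MvPolynomial σ ℂ)) ∧
      colonBy (Ideal.span (f '' (Finset.univ.erase i : Finset ι))) (f i) =
        Ideal.span (f '' (Finset.univ.erase i : Finset ι)) := by
  refine (lexNonneg_hilb_insert (homogIdeal_span_image hf _) (hf i) (he i)
    (lexNonneg_hilb_span hf he _)).2 ?_
  rw [← span_range_eq_sup, ← mul_assoc, Finset.mul_prod_erase _ (fun i => 1 - PowerSeries.X ^ e i)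
    (Finset.mem_univ i)]
  exact h

/-- One member `f i` of a complete intersection can be exchanged for `g` as soon as a power of `f i`
lies in the new ideal. -/
theorem IsCI.exchange (hf : ∀ i, (f i).IsHomogeneous (e i)) (he : ∀ i, 0 < e i) (h : IsCI f e)
    (i : ι) {g : MvPolynomial σ ℂ} {d : ℕ} (hg : g.IsHomogeneous d) {N : ℕ}
    (hN : f i ^ N ∈ Ideal.span (Set.range (Function.update f i g))) :
    IsCI (Function.update f i g) (Function.update e i d) := by
  obtain ⟨h1, h2⟩ := h.erase hf he i
  have him : Function.update f i g '' (Finset.univ.erase i : Finset ι) =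
      f '' (Finset.univ.erase i : Finset ι) := by
    refine Set.image_congr fun j hj => ?_
    simp only [Finset.coe_erase, Finset.coe_univ, Set.mem_sdiff, Set.mem_univ,
      Set.mem_singleton_iff, true_and] at hj
    simp [hj]
  set J := Ideal.span (f '' (Finset.univ.erase i : Finset ι))
  have hJ : HomogIdeal J := homogIdeal_span_image hf _
  have hsp : Ideal.span (Set.range (Function.update f i g)) = J ⊔ Ideal.span {g} := by
    rw [span_range_eq_sup _ i, him, Function.update_self]
  have hpow : ∀ n u, f i ^ n * u ∈ J → u ∈ J := by
    intro n
    induction n with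
    | zero => intro u hu; simpa using hu
    | succ n ih =>
      intro u hu
      apply ih
      rw [← h2, mem_colonBy, ← mul_assoc, ← pow_succ']
      exact hu
  have hcol : colonBy J g = J := by
    refine le_antisymm (fun u hu => hpow N u ?_) (le_colonBy J g)
    rw [hsp] at hN
    obtain ⟨x, hx, y, hy, hxy⟩ := Submodule.mem_sup.1 hN
    obtain ⟨v, rfl⟩ := Ideal.mem_span_singleton'.1 hy
    rw [← hxy, add_mul, mul_assoc]
    exact J.add_mem (J.mul_mem_right _ hx) (J.mul_mem_left _ hu)
  rw [IsCI, hsp, hilb_sup_span_of_colonBy_eq hJ hg hcol, h1, ← mul_assoc]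
  rw [← Finset.mul_prod_erase _ _ (Finset.mem_univ i), Function.update_self]
  congr 2
  refine Finset.prod_congr rfl fun j hj => ?_
  rw [Function.update_of_ne (Finset.ne_of_mem_erase hj)]

end Family

theorem isCI_X {σ : Type*} [Fintype σ] : IsCI (X : σ → MvPolynomial σ ℂ) (fun _ => 1) := by
  classical
  have key : ∀ T : Finset σ, hilb (Ideal.span ((X : σ → MvPolynomial σ ℂ) '' T)) =
      (∏ i ∈ T, (1 - PowerSeries.X ^ 1)) * hilb (⊥ : Ideal (MvPolynomial σ ℂ)) := by
    intro T
    induction T using Finset.induction_on with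
    | empty => simp
    | insert i T hi ih =>
      rw [Finset.coe_insert, span_image_insert, Finset.prod_insert hi, mul_assoc, ← ih]
      refine hilb_sup_span_of_colonBy_eq
        (homogIdeal_span_image (e := fun _ => 1) (fun i => isHomogeneous_X ℂ i) _)
        (isHomogeneous_X ℂ i) (le_antisymm (fun u hu => ?_) (le_colonBy _ _))
      rw [mem_colonBy, mem_ideal_span_X_image] at hu
      rw [mem_ideal_span_X_image]
      intro m hm
      obtain ⟨j, hj, hj'⟩ := hu (Finsupp.single i 1 + m) (by
        rw [mem_support_iff, coeff_X_mul]
        exact mem_support_iff.1 hm)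
      refine ⟨j, hj, ?_⟩
      rwa [Finsupp.add_apply, Finsupp.single_eq_of_ne, zero_add] at hj'
      rintro rfl
      exact hi hj
  simpa [IsCI] using key Finset.univ

end Hilbert

section BinomialSeries


/-- The coefficients of the series `(1 - t) ^ c`. -/
noncomputable def binomCoeff (c : ℂ) : ℕ → ℂ
  | 0 => 1
  | n + 1 => (n - c) / (n + 1) * binomCoeff c n

theorem succ_mul_binomCoeff (c : ℂ) (n : ℕ) :
    (n + 1) * binomCoeff c (n + 1) = (n - c) * binomCoeff c n := by
  rw [binomCoeff]
  field_simp

variable {R S : Type*} [CommRing R] [Algebra ℂ R] [CommRing S] [Algebra ℂ S]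

/-- The series `(1 - x t) ^ c`. -/
noncomputable def binomPow (c : ℂ) (x : R) : PowerSeries R :=
  PowerSeries.mk fun n => binomCoeff c n • x ^ n

/-- The series `(1 - x t)⁻¹`. -/
noncomputable def geomSeries {R : Type*} [CommRing R] (x : R) : PowerSeries R :=
  PowerSeries.mk fun n => x ^ n

theorem map_binomPow (φ : R →ₐ[ℂ] S) (c : ℂ) (x : R) :
    PowerSeries.map (φ : R →+* S) (binomPow c x) = binomPow c (φ x) := by
  ext n
  simp [binomPow]

theorem map_geomSeries {R S : Type*} [CommRing R] [CommRing S] (φ : R →+* S) (x : R) :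
    PowerSeries.map φ (geomSeries x) = geomSeries (φ x) := by
  ext n
  simp [geomSeries]

theorem one_sub_mul_geomSeries {R : Type*} [CommRing R] (x : R) :
    (1 - PowerSeries.C x * PowerSeries.X) * geomSeries x = 1 := by
  ext n
  rw [sub_mul, one_mul, mul_assoc, map_sub, PowerSeries.coeff_C_mul, PowerSeries.coeff_one]
  cases n with
  | zero => simp [geomSeries]
  | succ n => simp [PowerSeries.coeff_succ_X_mul, geomSeries, pow_succ']

theorem one_sub_mul_derivative_binomPow (c : ℂ) (x : R) :
    (1 - PowerSeries.C x * PowerSeries.X) * PowerSeries.derivative R (binomPow c x) =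
      -PowerSeries.C (c • x) * binomPow c x := by
  have key : ∀ n : ℕ, ((n : R) + 1) * (binomCoeff c (n + 1) • x ^ (n + 1)) =
      (n : R) * (x * binomCoeff c n • x ^ n) - c • x * binomCoeff c n • x ^ n := by
    intro n
    have h := congrArg (algebraMap ℂ R) (succ_mul_binomCoeff c n)
    simp only [map_mul, map_add, map_sub, map_natCast, map_one] at h
    simp only [Algebra.smul_def]
    linear_combination x ^ (n + 1) * h
  ext n
  rw [sub_mul, one_mul, mul_assoc, map_sub, PowerSeries.coeff_C_mul, PowerSeries.coeff_derivative,
    neg_mul, map_neg, PowerSeries.coeff_C_mul]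
  cases n with
  | zero =>
    have := key 0
    simp [binomPow] at this ⊢
    exact this
  | succ n =>
    rw [PowerSeries.coeff_succ_X_mul, PowerSeries.coeff_derivative]
    have := key (n + 1)
    simp only [binomPow, PowerSeries.coeff_mk]
    push_cast at this ⊢
    linear_combination this

theorem derivative_binomPow (c : ℂ) (x : R) :
    PowerSeries.derivative R (binomPow c x) = -PowerSeries.C (c • x) * geomSeries x *
      binomPow c x := by
  linear_combination geomSeries x * one_sub_mul_derivative_binomPow c x -
    PowerSeries.derivative R (binomPow c x) * one_sub_mul_geomSeries x

theorem Derivation.prod_eq_sum_mul_prod {A B ι : Type*} [CommRing A] [CommRing B] [Algebra A B]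
    (D : Derivation A B B) (f h : ι → B) (hD : ∀ i, D (f i) = h i * f i) (s : Finset ι) :
    D (∏ i ∈ s, f i) = (∑ i ∈ s, h i) * ∏ i ∈ s, f i := by
  classical
  induction s using Finset.induction_on with
  | empty => simp
  | insert i s hi ih =>
    rw [Finset.prod_insert hi, Finset.sum_insert hi, D.leibniz, ih, hD]
    simp only [smul_eq_mul]
    ring

theorem eq_of_one_sub_mul_derivative_eq {m u : ℂ} {f g : PowerSeries ℂ}
    (hf : (1 - PowerSeries.C u * PowerSeries.X) * PowerSeries.derivative ℂ f =
      -PowerSeries.C (m * u) * f)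
    (hg : (1 - PowerSeries.C u * PowerSeries.X) * PowerSeries.derivative ℂ g =
      -PowerSeries.C (m * u) * g)
    (h : PowerSeries.coeff 0 f = PowerSeries.coeff 0 g) : f = g := by
  have key : ∀ F : PowerSeries ℂ,
      (1 - PowerSeries.C u * PowerSeries.X) * PowerSeries.derivative ℂ F =
        -PowerSeries.C (m * u) * F →
      ∀ n : ℕ, PowerSeries.coeff (n + 1) F * (n + 1) = (n - m) * u * PowerSeries.coeff n F := by
    intro F hF n
    have h1 := congrArg (PowerSeries.coeff n) hF
    rw [sub_mul, one_mul, mul_assoc, map_sub, PowerSeries.coeff_C_mul,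
      PowerSeries.coeff_derivative, neg_mul, map_neg, PowerSeries.coeff_C_mul] at h1
    cases n with
    | zero => simp at h1 ⊢; linear_combination h1
    | succ n =>
      rw [PowerSeries.coeff_succ_X_mul, PowerSeries.coeff_derivative] at h1
      push_cast at h1 ⊢
      linear_combination h1
  ext n
  induction n with
  | zero => exact h
  | succ n ih =>
    have h1 := key f hf n
    have h2 := key g hg n
    rw [ih] at h1
    exact mul_right_cancel₀ (Nat.cast_add_one_ne_zero n) (h1.trans h2.symm)

theorem binomPow_pow (c u : ℂ) {m n : ℕ} (h : m * c = n) :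
    binomPow c u ^ m = (1 - PowerSeries.C u * PowerSeries.X) ^ n := by
  apply eq_of_one_sub_mul_derivative_eq (m := n) (u := u)
  · rw [PowerSeries.derivative_pow]
    have := one_sub_mul_derivative_binomPow c u
    cases m with
    | zero =>
      have : n = 0 := by simpa using h.symm
      simp [this]
    | succ m =>
      rw [← h]
      simp only [smul_eq_mul, map_mul, map_natCast] at this ⊢
      rw [Nat.add_sub_cancel, pow_succ]
      linear_combination ((m + 1 : ℕ) : PowerSeries ℂ) * binomPow c u ^ m * this
  · rw [PowerSeries.derivative_pow]
    cases n with
    | zero => simp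
    | succ n =>
      simp only [map_sub, Derivation.leibniz, smul_eq_mul, PowerSeries.derivative_C,
        PowerSeries.derivative_X, map_mul, map_natCast, Derivation.map_one_eq_zero]
      rw [Nat.add_sub_cancel, pow_succ]
      ring
  · simp [binomPow, binomCoeff]

end BinomialSeries

section Generators


variable {σ : Type*} [Fintype σ]

/-- The series `∏ j, (1 - X j * t) ^ c`. -/
noncomputable def prodSeries (σ : Type*) [Fintype σ] (c : ℂ) : PowerSeries (MvPolynomial σ ℂ) :=
  ∏ j, binomPow c (X j)

/-- The series `∏ j, (1 - X j * t) ^ c` divided by `1 - X l * t`. -/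
noncomputable def genSeries (c : ℂ) (l : σ) : PowerSeries (MvPolynomial σ ℂ) :=
  prodSeries σ c * geomSeries (X l)

theorem one_sub_mul_genSeries (c : ℂ) (l : σ) :
    (1 - PowerSeries.C (X l) * PowerSeries.X) * genSeries c l = prodSeries σ c := by
  rw [genSeries, mul_left_comm, one_sub_mul_geomSeries, mul_one]

theorem X_mul_derivative_prodSeries (c : ℂ) :
    PowerSeries.X * PowerSeries.derivative _ (prodSeries σ c) =
      -PowerSeries.C (C c) * ∑ l, (genSeries c l - prodSeries σ c) := by
  rw [prodSeries, Derivation.prod_eq_sum_mul_prod _ _ _ fun j => derivative_binomPow c (X j),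
    ← prodSeries, Finset.sum_mul, Finset.mul_sum, Finset.mul_sum]
  refine Finset.sum_congr rfl fun l _ => ?_
  have h := one_sub_mul_geomSeries (X l : MvPolynomial σ ℂ)
  rw [genSeries, MvPolynomial.smul_eq_C_mul, map_mul]
  linear_combination PowerSeries.C (C c) * prodSeries σ c * h

theorem mul_coeff_prodSeries (c : ℂ) (n : ℕ) :
    C (n - c * Fintype.card σ) * PowerSeries.coeff n (prodSeries σ c) =
      -C c * ∑ l : σ, PowerSeries.coeff n (genSeries c l) := by
  have h := congrArg (PowerSeries.coeff n) (X_mul_derivative_prodSeries (σ := σ) c)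
  have h1 : PowerSeries.coeff n (PowerSeries.X * PowerSeries.derivative _ (prodSeries σ c)) =
      C (n : ℂ) * PowerSeries.coeff n (prodSeries σ c) := by
    cases n with
    | zero => simp
    | succ n =>
      rw [PowerSeries.coeff_succ_X_mul, PowerSeries.coeff_derivative]
      simp [mul_comm]
  rw [h1, neg_mul, map_neg, PowerSeries.coeff_C_mul, map_sum] at h
  simp only [map_sub, Finset.sum_sub_distrib, Finset.sum_const, Finset.card_univ,
    nsmul_eq_mul, map_mul, map_natCast] at h ⊢
  linear_combination h

theorem coeff_succ_genSeries (c : ℂ) (l : σ) (n : ℕ) :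
    PowerSeries.coeff (n + 1) (genSeries c l) =
      PowerSeries.coeff (n + 1) (prodSeries σ c) + X l * PowerSeries.coeff n (genSeries c l) := by
  rw [← one_sub_mul_genSeries c l, sub_mul, one_mul, mul_assoc, map_sub, PowerSeries.coeff_C_mul,
    PowerSeries.coeff_succ_X_mul]
  ring

theorem isHomogeneous_coeff_mul {σ : Type*} {f g : PowerSeries (MvPolynomial σ ℂ)}
    (hf : ∀ n, (PowerSeries.coeff n f).IsHomogeneous n)
    (hg : ∀ n, (PowerSeries.coeff n g).IsHomogeneous n) (n : ℕ) :
    (PowerSeries.coeff n (f * g)).IsHomogeneous n := by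
  rw [PowerSeries.coeff_mul]
  refine IsHomogeneous.sum _ _ _ fun p hp => ?_
  rw [← Finset.HasAntidiagonal.mem_antidiagonal.1 hp]
  exact (hf _).mul (hg _)

theorem isHomogeneous_coeff_prodSeries (c : ℂ) (n : ℕ) :
    (PowerSeries.coeff n (prodSeries σ c)).IsHomogeneous n := by
  classical
  have : ∀ (s : Finset σ) (n : ℕ),
      (PowerSeries.coeff n (∏ j ∈ s, binomPow c (X j : MvPolynomial σ ℂ))).IsHomogeneous n := by
    intro s
    induction s using Finset.induction_on with
    | empty =>
      intro n
      rw [Finset.prod_empty, PowerSeries.coeff_one]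
      split_ifs with h
      · rw [h]; exact isHomogeneous_one _ _
      · exact isHomogeneous_zero _ _ _
    | insert i s hi ih =>
      rw [Finset.prod_insert hi]
      refine isHomogeneous_coeff_mul (fun n => ?_) ih
      rw [binomPow, PowerSeries.coeff_mk, MvPolynomial.smul_eq_C_mul]
      exact (isHomogeneous_X_pow i n).C_mul _
  exact this _ n

theorem isHomogeneous_coeff_genSeries (c : ℂ) (l : σ) (n : ℕ) :
    (PowerSeries.coeff n (genSeries c l)).IsHomogeneous n := by
  refine isHomogeneous_coeff_mul (isHomogeneous_coeff_prodSeries c) (fun n => ?_) n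
  rw [geomSeries, PowerSeries.coeff_mk]
  exact isHomogeneous_X_pow l n

theorem map_rename_prodSeries (c : ℂ) (w : Equiv.Perm σ) :
    PowerSeries.map (rename w : MvPolynomial σ ℂ →ₐ[ℂ] _).toRingHom (prodSeries σ c) =
      prodSeries σ c := by
  rw [prodSeries, map_prod]
  refine Fintype.prod_equiv w _ _ fun j => ?_
  exact (map_binomPow (rename w) c (X j)).trans (by rw [rename_X])

theorem rename_coeff_genSeries (c : ℂ) (w : Equiv.Perm σ) (l : σ) (n : ℕ) :
    rename w (PowerSeries.coeff n (genSeries c l)) = PowerSeries.coeff n (genSeries c (w l)) := by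
  have : PowerSeries.map (rename w : MvPolynomial σ ℂ →ₐ[ℂ] _).toRingHom (genSeries c l) =
      genSeries c (w l) := by
    rw [genSeries, map_mul, map_rename_prodSeries, map_geomSeries]
    simp [genSeries]
  rw [← this, PowerSeries.coeff_map]
  rfl

end Generators

theorem Polynomial.count_roots_one_sub_C_mul_X (x : ℂ) {u : ℂ} (hu : u ≠ 0) :
    (1 - Polynomial.C x * Polynomial.X).roots.count u⁻¹ = if x = u then 1 else 0 := by
  by_cases hx : x = 0
  · subst hx
    simp [hu.symm]
  · have : (1 - Polynomial.C x * Polynomial.X) =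
        Polynomial.C (-x) * (Polynomial.X - Polynomial.C x⁻¹) := by
      rw [mul_sub, ← Polynomial.C_mul, neg_mul, mul_inv_cancel₀ hx]
      simp
      ring
    rw [this, Polynomial.roots_C_mul _ (neg_ne_zero.2 hx), Polynomial.roots_X_sub_C,
      Multiset.count_singleton]
    simp [eq_comm]

theorem eq_const_of_pow_eq_prod_pow {σ : Type*} [Fintype σ] [DecidableEq σ] {b : ℕ}
    (hab : (Fintype.card σ).Coprime b) {x : σ → ℂ} {p : Polynomial ℂ}
    (hp : p ^ Fintype.card σ = (∏ j, (1 - Polynomial.C (x j) * Polynomial.X)) ^ b)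
    {l : σ} (hl : x l ≠ 0) (j : σ) : x j = x l := by
  have hne : ∀ j, (1 - Polynomial.C (x j) * Polynomial.X) ≠ 0 := by
    intro j h
    have := congrArg (Polynomial.eval 0) h
    simp at this
  have h := congrArg (fun q => q.roots.count (x l)⁻¹) hp
  simp only [Polynomial.roots_pow, Multiset.count_nsmul] at h
  rw [Polynomial.roots_prod _ _ (Finset.prod_ne_zero_iff.2 fun j _ => hne j),
    Multiset.count_bind] at h
  simp only [Polynomial.count_roots_one_sub_C_mul_X _ hl] at h
  rw [← Finset.sum_eq_multiset_sum, Finset.sum_boole, Nat.cast_id] at h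
  have hd : Fintype.card σ ∣ (Finset.univ.filter fun j => x j = x l).card :=
    hab.dvd_of_dvd_mul_left (Dvd.intro _ h)
  have hpos : 0 < (Finset.univ.filter fun j => x j = x l).card :=
    Finset.card_pos.2 ⟨l, by simp⟩
  have := (Finset.card_eq_iff_eq_univ _).1
    (le_antisymm (Finset.card_le_univ _) (Nat.le_of_dvd hpos hd))
  have hj := Finset.mem_univ j
  rw [← this] at hj
  simpa using hj

section Theta

variable (σ : Type*) [Fintype σ]

/-- The sum of the variables. -/
noncomputable def varSum : MvPolynomial σ ℂ := ∑ i, X i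

variable {σ}

/-- The coefficient of `t ^ b` in `∏ j, (1 - X j * t) ^ (b / a)` divided by `1 - X l * t`, where `a`
is the number of variables. -/
noncomputable def singularVector (b : ℕ) (l : σ) : MvPolynomial σ ℂ :=
  PowerSeries.coeff b (genSeries ((b : ℂ) / Fintype.card σ) l)

/-- A system of parameters of degree `b` that is permuted by the symmetric group. -/
noncomputable def theta (b : ℕ) (l : σ) : MvPolynomial σ ℂ :=
  singularVector b l + varSum σ ^ b

theorem isHomogeneous_varSum : (varSum σ).IsHomogeneous 1 :=
  IsHomogeneous.sum _ _ _ fun i _ => isHomogeneous_X ℂ i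

theorem isHomogeneous_singularVector (b : ℕ) (l : σ) : (singularVector b l).IsHomogeneous b :=
  isHomogeneous_coeff_genSeries _ l b

theorem isHomogeneous_theta (b : ℕ) (l : σ) : (theta b l).IsHomogeneous b := by
  refine (isHomogeneous_singularVector b l).add ?_
  simpa using (isHomogeneous_varSum (σ := σ)).pow b

theorem rename_varSum (w : Equiv.Perm σ) : rename w (varSum σ) = varSum σ := by
  rw [varSum, map_sum]
  exact Fintype.sum_equiv w _ _ fun i => by rw [rename_X]

theorem rename_singularVector (b : ℕ) (w : Equiv.Perm σ) (l : σ) :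
    rename w (singularVector b l) = singularVector b (w l) :=
  rename_coeff_genSeries _ w l b

theorem rename_theta (b : ℕ) (w : Equiv.Perm σ) (l : σ) :
    rename w (theta b l) = theta b (w l) := by
  rw [theta, map_add, map_pow, rename_varSum, rename_singularVector, theta]

theorem eval_singularVector_congr (b : ℕ) (x : σ → ℂ) {i j : σ} (h : x i = x j) :
    eval x (singularVector b i) = eval x (singularVector b j) := by
  have : PowerSeries.map (eval x) (genSeries ((b : ℂ) / Fintype.card σ) i) =
      PowerSeries.map (eval x) (genSeries ((b : ℂ) / Fintype.card σ) j) := by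
    simp only [genSeries, map_mul, map_geomSeries, eval_X, h]
  have := congrArg (PowerSeries.coeff b) this
  simpa only [PowerSeries.coeff_map, singularVector] using this

variable [Nonempty σ]

theorem sum_singularVector {b : ℕ} (hb : 0 < b) : ∑ l : σ, singularVector b l = 0 := by
  have ha : (Fintype.card σ : ℂ) ≠ 0 := Nat.cast_ne_zero.2 Fintype.card_ne_zero
  have h := mul_coeff_prodSeries (σ := σ) ((b : ℂ) / Fintype.card σ) b
  rw [div_mul_cancel₀ _ ha, sub_self, C_0, zero_mul, eq_comm, ← C_neg] at h
  refine (mul_eq_zero.1 h).resolve_left ?_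
  rw [C_eq_zero]
  exact neg_ne_zero.2 (div_ne_zero (Nat.cast_ne_zero.2 hb.ne') ha)

theorem eval_coeff_eq_zero {b : ℕ} {x : σ → ℂ}
    (hx : ∀ l, eval x (singularVector b l) = 0) (n : ℕ) :
    (∀ l : σ, eval x (PowerSeries.coeff (b + n) (genSeries ((b : ℂ) / Fintype.card σ) l)) = 0) ∧
      eval x (PowerSeries.coeff (b + n + 1) (prodSeries σ ((b : ℂ) / Fintype.card σ))) = 0 := by
  have ha : (Fintype.card σ : ℂ) ≠ 0 := Nat.cast_ne_zero.2 Fintype.card_ne_zero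
  set c := (b : ℂ) / Fintype.card σ with hc
  have hca : c * Fintype.card σ = b := div_mul_cancel₀ _ ha
  have step : ∀ n, (∀ l : σ, eval x (PowerSeries.coeff n (genSeries c l)) = 0) →
      eval x (PowerSeries.coeff (n + 1) (prodSeries σ c)) = 0 := by
    intro n hn
    have h := congrArg (eval x) (mul_coeff_prodSeries (σ := σ) c (n + 1))
    simp only [coeff_succ_genSeries, map_mul, map_neg, map_sum, map_add, eval_C, hn, mul_zero,
      add_zero, Finset.sum_const, Finset.card_univ, nsmul_eq_mul] at h
    have h2 : ((n : ℂ) + 1) * eval x (PowerSeries.coeff (n + 1) (prodSeries σ c)) = 0 := by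
      push_cast at h
      linear_combination h
    exact (mul_eq_zero.1 h2).resolve_left (Nat.cast_add_one_ne_zero n)
  induction n with
  | zero => exact ⟨hx, step _ hx⟩
  | succ n ih =>
    have : ∀ l : σ, eval x (PowerSeries.coeff (b + n + 1) (genSeries c l)) = 0 := by
      intro l
      rw [coeff_succ_genSeries, map_add, ih.2, map_mul, ih.1 l, mul_zero, add_zero]
    exact ⟨this, step _ this⟩

theorem eq_const_of_eval_singularVector {b : ℕ} (hab : (Fintype.card σ).Coprime b)
    {x : σ → ℂ} (hx : ∀ l, eval x (singularVector b l) = 0) {l : σ} (hl : x l ≠ 0) (j : σ) :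
    x j = x l := by
  classical
  have ha : (Fintype.card σ : ℂ) ≠ 0 := Nat.cast_ne_zero.2 Fintype.card_ne_zero
  set c := (b : ℂ) / Fintype.card σ with hc
  set P := PowerSeries.map (eval x) (prodSeries σ c) with hP
  have hP' : P = ∏ j, binomPow c (x j) := by
    rw [hP, prodSeries, map_prod]
    refine Finset.prod_congr rfl fun j _ => ?_
    have := map_binomPow (aeval x : MvPolynomial σ ℂ →ₐ[ℂ] ℂ) c (X j)
    rwa [aeval_X] at this
  have htr : ((PowerSeries.trunc (b + 1) P : Polynomial ℂ) : PowerSeries ℂ) = P := by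
    ext n
    rw [Polynomial.coeff_coe, PowerSeries.coeff_trunc]
    split_ifs with h
    · rfl
    · obtain ⟨m, rfl⟩ := Nat.exists_eq_add_of_le (not_lt.1 h)
      rw [hP, PowerSeries.coeff_map, add_right_comm]
      exact (eval_coeff_eq_zero hx m).2.symm
  refine eq_const_of_pow_eq_prod_pow hab (p := PowerSeries.trunc (b + 1) P) ?_ hl j
  apply Polynomial.coe_injective ℂ
  rw [Polynomial.coe_pow, htr, hP', Polynomial.coe_pow, ← Finset.prod_pow]
  have : ((∏ j, (1 - Polynomial.C (x j) * Polynomial.X) : Polynomial ℂ) : PowerSeries ℂ) =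
      ∏ j, (1 - PowerSeries.C (x j) * PowerSeries.X) := by
    rw [← Polynomial.coeToPowerSeries.ringHom_apply, map_prod]
    simp
  rw [this, ← Finset.prod_pow]
  exact Finset.prod_congr rfl fun j _ => binomPow_pow c (x j) (mul_div_cancel₀ _ ha)

/-- The origin is the only common zero of the forms `theta b l`. -/
theorem eq_zero_of_eval_theta {b : ℕ} (hb : 0 < b) (hab : (Fintype.card σ).Coprime b)
    {x : σ → ℂ} (hx : ∀ l, eval x (theta b l) = 0) : x = 0 := by
  have ha : (Fintype.card σ : ℂ) ≠ 0 := Nat.cast_ne_zero.2 Fintype.card_ne_zero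
  have hs : eval x (varSum σ) = 0 := by
    have h : eval x (∑ l : σ, theta b l) = 0 := by
      rw [map_sum]
      exact Finset.sum_eq_zero fun l _ => hx l
    simp only [theta, Finset.sum_add_distrib, sum_singularVector hb, zero_add, Finset.sum_const,
      Finset.card_univ, nsmul_eq_mul, map_mul, map_natCast, map_pow] at h
    exact pow_eq_zero_iff hb.ne' |>.1 ((mul_eq_zero.1 h).resolve_left ha)
  have hf : ∀ l : σ, eval x (singularVector b l) = 0 := by
    intro l
    have := hx l
    rwa [theta, map_add, map_pow, hs, zero_pow hb.ne', add_zero] at this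
  by_contra hne
  obtain ⟨l, hl⟩ := Function.ne_iff.1 hne
  have hconst := eq_const_of_eval_singularVector hab hf hl
  rw [varSum, map_sum] at hs
  simp only [eval_X, hconst, Finset.sum_const, Finset.card_univ, nsmul_eq_mul] at hs
  exact hl ((mul_eq_zero.1 hs).resolve_left ha)

end Theta

theorem IsCI.exchange_all {σ ι : Type*} [Finite σ] [Fintype ι] [DecidableEq ι]
    {f g : ι → MvPolynomial σ ℂ} {e d : ι → ℕ} (hf : ∀ i, (f i).IsHomogeneous (e i))
    (he : ∀ i, 0 < e i) (hg : ∀ i, (g i).IsHomogeneous (d i)) (hd : ∀ i, 0 < d i) (h : IsCI f e)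
    (H : ∀ (T : Finset ι) (i : ι), ∃ N,
      f i ^ N ∈ Ideal.span (Set.range ((insert i T).piecewise g f))) : IsCI g d := by
  have key : ∀ T : Finset ι, IsCI (T.piecewise g f) (T.piecewise d e) := by
    intro T
    induction T using Finset.induction_on with
    | empty => simpa using h
    | insert i T hi ih =>
      rw [Finset.piecewise_insert, Finset.piecewise_insert]
      obtain ⟨N, hN⟩ := H T i
      rw [Finset.piecewise_insert] at hN
      refine ih.exchange (fun j => ?_) (fun j => ?_) i (hg i) (N := N) ?_
      · by_cases hj : j ∈ T <;> simp [hj, hf, hg]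
      · by_cases hj : j ∈ T <;> simp [hj, he, hd]
      · rwa [Finset.piecewise_eq_of_notMem _ _ _ hi]
  simpa using key Finset.univ

theorem exists_pow_mem_span {σ ι : Type*} [Finite σ] {f : ι → MvPolynomial σ ℂ}
    (hf : ∀ x : σ → ℂ, (∀ i, eval x (f i) = 0) → x = 0) {p : MvPolynomial σ ℂ}
    (hp : eval 0 p = 0) : ∃ N, p ^ N ∈ Ideal.span (Set.range f) := by
  have : p ∈ (Ideal.span (Set.range f)).radical := by
    rw [← vanishingIdeal_zeroLocus_eq_radical (K := ℂ)]
    intro x hx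
    rw [hf x fun i => ?_]
    · simpa using hp
    · have := hx (f i) (Ideal.subset_span ⟨i, rfl⟩)
      rwa [aeval_eq_eval] at this
  exact this

theorem IsCI.of_span_eq {σ ι : Type*} [Finite σ] [Fintype ι] {f g : ι → MvPolynomial σ ℂ}
    {e : ι → ℕ} (h : IsCI f e)
    (hfg : Ideal.span (Set.range g) = Ideal.span (Set.range f)) : IsCI g e := by
  rw [IsCI, hfg]
  exact h

section ThetaIdeal

variable {σ : Type*} [Fintype σ]

theorem isCI_X_pow {b : ℕ} (hb : 0 < b) :
    IsCI (fun i : σ => (X i : MvPolynomial σ ℂ) ^ b) (fun _ => b) := by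
  classical
  refine isCI_X.exchange_all (fun i => isHomogeneous_X ℂ i) (fun _ => one_pos)
    (fun i => isHomogeneous_X_pow i b) (fun _ => hb) fun T i => ⟨b, Ideal.subset_span ⟨i, ?_⟩⟩
  simp

theorem isCI_pivot [DecidableEq σ] (o : σ) :
    IsCI (fun i => if i = o then X o else X i - X o : σ → MvPolynomial σ ℂ) (fun _ => 1) := by
  refine isCI_X.of_span_eq (le_antisymm ?_ ?_)
  · rw [Ideal.span_le]
    rintro _ ⟨i, rfl⟩
    dsimp only
    split_ifs
    · exact Ideal.subset_span ⟨o, rfl⟩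
    · exact Ideal.sub_mem _ (Ideal.subset_span ⟨i, rfl⟩) (Ideal.subset_span ⟨o, rfl⟩)
  · set I := Ideal.span (Set.range (fun i => if i = o then X o else X i - X o :
      σ → MvPolynomial σ ℂ))
    rw [Ideal.span_le]
    rintro _ ⟨i, rfl⟩
    have ho : X o ∈ I := Ideal.subset_span ⟨o, by simp⟩
    by_cases hi : i = o
    · rwa [hi]
    · have : X i - X o ∈ I := Ideal.subset_span ⟨i, by simp [hi]⟩
      simpa using I.add_mem this ho

theorem isCI_theta [Nonempty σ] {b : ℕ} (hb : 0 < b) (hab : (Fintype.card σ).Coprime b) :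
    IsCI (theta b : σ → MvPolynomial σ ℂ) (fun _ => b) := by
  classical
  obtain ⟨o⟩ := ‹Nonempty σ›
  have : Nonempty σ := ⟨o⟩
  set f : σ → MvPolynomial σ ℂ := fun i => if i = o then X o else X i - X o with hf
  have hfh : ∀ i, (f i).IsHomogeneous 1 := by
    intro i
    rw [hf]
    dsimp only
    split_ifs
    · exact isHomogeneous_X ℂ o
    · exact (isHomogeneous_X ℂ i).sub (isHomogeneous_X ℂ o)
  have hf0 : ∀ i, eval 0 (f i) = 0 := by
    intro i
    rw [hf]
    dsimp only
    split_ifs <;> simp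
  have key : ∀ F : σ → MvPolynomial σ ℂ, F o = theta b o →
      (∀ j, F j = theta b j ∨ F j = X j - X o) → ∀ x : σ → ℂ, (∀ i, eval x (F i) = 0) → x = 0 := by
    intro F hFo hF x hx
    refine eq_zero_of_eval_theta hb hab fun l => ?_
    rcases hF l with h | h
    · rw [← h]
      exact hx l
    · have h1 := hx l
      rw [h, map_sub, eval_X, eval_X, sub_eq_zero] at h1
      have h2 := hx o
      rw [hFo] at h2
      rw [← h2, theta, theta, map_add, map_add, eval_singularVector_congr b x h1]
  have h1 : IsCI (Function.update f o (theta b o)) (Function.update (fun _ => 1) o b) := by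
    obtain ⟨N, hN⟩ := exists_pow_mem_span (key (Function.update f o (theta b o)) (by simp)
      fun j => by by_cases hj : j = o <;> simp [hj, hf]) (hf0 o)
    exact (isCI_pivot o).exchange hfh (fun _ => one_pos) o (isHomogeneous_theta b o) hN
  refine h1.exchange_all (fun i => ?_) (fun i => ?_) (fun i => isHomogeneous_theta b i)
    (fun _ => hb) fun T i => ?_
  · by_cases hi : i = o
    · subst hi
      simpa using isHomogeneous_theta b i
    · simpa [hi] using hfh i
  · by_cases hi : i = o <;> simp [hi, hb]
  · by_cases hi : i = o
    · refine ⟨1, ?_⟩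
      rw [pow_one]
      exact Ideal.subset_span ⟨i, by simp [hi]⟩
    · refine exists_pow_mem_span (key _ ?_ fun j => ?_) (by rw [Function.update_of_ne hi, hf0])
      · by_cases ho : o ∈ insert i T <;> simp only [ho, Finset.piecewise_eq_of_mem,
          Finset.piecewise_eq_of_notMem, not_false_eq_true, Function.update_self]
      · by_cases ho : j ∈ insert i T
        · exact Or.inl (Finset.piecewise_eq_of_mem _ _ _ ho)
        · rw [Finset.piecewise_eq_of_notMem _ _ _ ho]
          by_cases hj : j = o <;> simp [hj, hf]

variable (σ) in
/-- The ideal generated by the singular vectors. -/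
noncomputable def singularIdeal (b : ℕ) : Ideal (MvPolynomial σ ℂ) :=
  Ideal.span (Set.range (singularVector b))

theorem homogIdeal_singularIdeal (b : ℕ) : HomogIdeal (singularIdeal σ b) :=
  homogIdeal_span <| by
    rintro _ ⟨i, rfl⟩
    exact ⟨b, isHomogeneous_singularVector b i⟩

theorem singularVector_mem (b : ℕ) (l : σ) : singularVector b l ∈ singularIdeal σ b :=
  Ideal.subset_span ⟨l, rfl⟩

theorem span_theta [Nonempty σ] {b : ℕ} (hb : 0 < b) :
    Ideal.span (Set.range (theta b)) = singularIdeal σ b ⊔ Ideal.span {varSum σ ^ b} := by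
  set I := Ideal.span (Set.range (theta b : σ → _)) with hI
  have ha : (Fintype.card σ : ℂ) ≠ 0 := Nat.cast_ne_zero.2 Fintype.card_ne_zero
  have hs : varSum σ ^ b ∈ I := by
    have h : ∑ l : σ, theta b l ∈ I := I.sum_mem fun l _ => Ideal.subset_span ⟨l, rfl⟩
    simp only [theta, Finset.sum_add_distrib, sum_singularVector hb, zero_add, Finset.sum_const,
      Finset.card_univ, nsmul_eq_mul] at h
    have h2 := I.mul_mem_left (C (Fintype.card σ : ℂ)⁻¹) h
    rwa [← mul_assoc, ← C_eq_coe_nat, ← C_mul, inv_mul_cancel₀ ha, C_1, one_mul] at h2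
  apply le_antisymm
  · rw [hI, Ideal.span_le]
    rintro _ ⟨i, rfl⟩
    exact Submodule.add_mem_sup (singularVector_mem b i) (Ideal.mem_span_singleton_self _)
  · refine sup_le ?_ ((Ideal.span_singleton_le_iff_mem _).2 hs)
    rw [singularIdeal, Ideal.span_le]
    rintro _ ⟨i, rfl⟩
    have : theta b i ∈ I := Ideal.subset_span ⟨i, rfl⟩
    simpa [theta] using I.sub_mem this hs

theorem colonBy_varSum [Nonempty σ] {b : ℕ} (hb : 0 < b) (hab : (Fintype.card σ).Coprime b) :
    colonBy (singularIdeal σ b) (varSum σ) = singularIdeal σ b := by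
  classical
  obtain ⟨o⟩ := ‹Nonempty σ›
  have : Nonempty σ := ⟨o⟩
  set F : σ → MvPolynomial σ ℂ := Function.update (singularVector b) o (varSum σ ^ b) with hF
  have hFh : ∀ i, (F i).IsHomogeneous b := by
    intro i
    by_cases hi : i = o
    · subst hi
      simpa [hF] using (isHomogeneous_varSum (σ := σ)).pow b
    · simpa [hF, hi] using isHomogeneous_singularVector b i
  have him : Ideal.span (F '' (Finset.univ.erase o : Finset σ)) = singularIdeal σ b := by
    apply le_antisymm
    · rw [Ideal.span_le]
      rintro _ ⟨i, hi, rfl⟩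
      rw [hF, Function.update_of_ne (by simpa using hi)]
      exact singularVector_mem b i
    · set K := Ideal.span (F '' (Finset.univ.erase o : Finset σ))
      have hK : ∀ i, i ≠ o → singularVector b i ∈ K := fun i hi =>
        Ideal.subset_span ⟨i, by simpa using hi, by simp [hF, hi]⟩
      rw [singularIdeal, Ideal.span_le]
      rintro _ ⟨i, rfl⟩
      by_cases hi : i = o
      · subst hi
        have h := sum_singularVector (σ := σ) hb
        rw [← Finset.add_sum_erase _ _ (Finset.mem_univ i)] at h
        rw [eq_neg_of_add_eq_zero_left h]
        exact K.neg_mem (K.sum_mem fun j hj => hK j (Finset.ne_of_mem_erase hj))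
      · exact hK i hi
  have hCI : IsCI F (fun _ => b) := by
    refine (isCI_theta hb hab).of_span_eq ?_
    rw [span_theta hb, span_range_eq_sup F o, him]
    simp [hF]
  have hcol := (hCI.erase hFh (fun _ => hb) o).2
  rw [him, hF, Function.update_self] at hcol
  refine le_antisymm (fun u hu => ?_) (le_colonBy _ _)
  rw [← hcol, mem_colonBy]
  obtain ⟨n, rfl⟩ := Nat.exists_eq_succ_of_ne_zero hb.ne'
  rw [pow_succ, mul_assoc]
  exact Ideal.mul_mem_left _ _ hu

end ThetaIdeal

section Semicontinuity

variable {V W : Type*} [AddCommGroup V] [Module ℂ V] [FiniteDimensional ℂ V] [AddCommGroup W]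
  [Module ℂ W]

/-- The rank in a pencil of linear maps drops at finitely many places only. -/
theorem finite_setOf_rank_lt (A B : V →ₗ[ℂ] W) (t₀ : ℂ) :
    {t : ℂ | Module.finrank ℂ (LinearMap.range (A + t • B)) <
      Module.finrank ℂ (LinearMap.range (A + t₀ • B))}.Finite := by
  set N := A + t₀ • B with hN
  obtain ⟨P, hP⟩ := N.rangeRestrict.exists_rightInverse_of_surjective N.range_rangeRestrict
  obtain ⟨S, hS⟩ := (LinearMap.range N).subtype.exists_leftInverse_of_injective
    (Submodule.ker_subtype _)
  set K : Module.End ℂ (LinearMap.range N) := S ∘ₗ B ∘ₗ P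
  refine ((Module.End.finite_hasEigenvalue K).image fun l => t₀ - l⁻¹).subset fun t ht => ?_
  have hSN : S ∘ₗ N ∘ₗ P = LinearMap.id := by
    ext v
    have h1 := LinearMap.congr_fun hP v
    have h2 := LinearMap.congr_fun hS v
    have h3 : N (P v) = v := congrArg Subtype.val h1
    simp only [LinearMap.comp_apply] at h2 ⊢
    rw [h3]
    exact congrArg Subtype.val h2
  have hSt : S ∘ₗ (A + t • B) ∘ₗ P = LinearMap.id + (t - t₀) • K := by
    rw [← hSN]
    ext v
    simp [K, hN, sub_smul]
  have hninj : ¬ Function.Injective (S ∘ₗ (A + t • B) ∘ₗ P) := by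
    intro hinj
    refine absurd (Set.mem_ofPred.1 ht) (not_lt.2 ?_)
    have h1 := LinearMap.finrank_range_of_inj hinj
    rw [← h1, LinearMap.range_comp]
    refine (Submodule.finrank_map_le _ _).trans (Submodule.finrank_mono ?_)
    exact LinearMap.range_comp_le_range _ _
  rw [hSt, ← LinearMap.ker_eq_bot, Submodule.eq_bot_iff] at hninj
  push Not at hninj
  obtain ⟨v, hv, hv0⟩ := hninj
  have hv' : v + (t - t₀) • K v = 0 := hv
  have ht0 : t - t₀ ≠ 0 := by
    intro h
    rw [h, zero_smul, add_zero] at hv'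
    exact hv0 hv'
  refine ⟨-(t - t₀)⁻¹, Module.End.hasEigenvalue_of_hasEigenvector (x := v)
    ⟨Module.End.mem_eigenspace_iff.2 ?_, hv0⟩, ?_⟩
  · have : K v = (t - t₀)⁻¹ • ((t - t₀) • K v) := by rw [smul_smul, inv_mul_cancel₀ ht0, one_smul]
    rw [this, eq_neg_of_add_eq_zero_right hv', smul_neg, neg_smul]
  · simp [inv_neg]

end Semicontinuity

section Deformation

variable {σ ι : Type*} [Finite σ] [Fintype ι]

/-- The map `g ↦ ∑ i, g i * f i` on families of forms of degree `d`. -/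
noncomputable def macaulayMap (f : ι → MvPolynomial σ ℂ) (d : ℕ) :
    (ι → homogeneousSubmodule σ ℂ d) →ₗ[ℂ] MvPolynomial σ ℂ :=
  ∑ i, LinearMap.mulRight ℂ (f i) ∘ₗ Submodule.subtype _ ∘ₗ LinearMap.proj i

theorem macaulayMap_apply {σ ι : Type*} [Fintype ι] (f : ι → MvPolynomial σ ℂ) (d : ℕ)
    (g : ι → homogeneousSubmodule σ ℂ d) :
    macaulayMap f d g = ∑ i, (g i : MvPolynomial σ ℂ) * f i := by
  simp [macaulayMap]

theorem range_macaulayMap {σ ι : Type*} [Fintype ι] {f : ι → MvPolynomial σ ℂ} {b : ℕ}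
    (hf : ∀ i, (f i).IsHomogeneous b)
    (d : ℕ) :
    LinearMap.range (macaulayMap f d) = gradedPiece (Ideal.span (Set.range f)) (d + b) := by
  apply le_antisymm
  · rintro _ ⟨g, rfl⟩
    rw [macaulayMap_apply]
    exact ⟨Ideal.sum_mem _ fun i _ => Ideal.mul_mem_left _ _ (Ideal.subset_span ⟨i, rfl⟩),
      IsHomogeneous.sum _ _ _ fun i _ => (g i).2.mul (hf i)⟩
  · rintro p ⟨hp, hpd⟩
    obtain ⟨g, rfl⟩ := (Ideal.mem_span_range_iff_exists_fun).1 hp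
    refine ⟨fun i => ⟨homogeneousComponent d (g i), homogeneousComponent_isHomogeneous _ _⟩, ?_⟩
    have h := homogeneousComponent_of_mem (m := d + b) hpd
    rw [if_pos rfl] at h
    rw [macaulayMap_apply, ← h, map_sum]
    refine Finset.sum_congr rfl fun i _ => ?_
    rw [mul_comm (g i), homogeneousComponent_mul_of_isHomogeneous (hf i), mul_comm]

theorem gradedPiece_span_range_eq_bot {σ ι : Type*} [Fintype ι] {f : ι → MvPolynomial σ ℂ} {b : ℕ}
    (hf : ∀ i, (f i).IsHomogeneous b) {d : ℕ} (hd : d < b) :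
    gradedPiece (Ideal.span (Set.range f)) d = ⊥ := by
  classical
  have key : ∀ T : Finset ι, gradedPiece (Ideal.span (f '' T)) d = ⊥ := by
    intro T
    induction T using Finset.induction_on with
    | empty =>
      rw [Finset.coe_empty, Set.image_empty, Ideal.span_empty, eq_bot_iff]
      exact fun p hp => hp.1
    | insert i T hi ih =>
      rw [Finset.coe_insert, span_image_insert, gradedPiece_sup_span_of_lt
        (homogIdeal_span_image hf _) (hf i) hd, ih]
  simpa using key Finset.univ

variable {f₀ f₁ : ι → MvPolynomial σ ℂ} {b : ℕ}

/-- The pencil through two families of forms. -/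
noncomputable def pencil (f₀ f₁ : ι → MvPolynomial σ ℂ) (t : ℂ) (i : ι) : MvPolynomial σ ℂ :=
  (1 - t) • f₀ i + t • f₁ i

theorem isHomogeneous_pencil {σ ι : Type*} {f₀ f₁ : ι → MvPolynomial σ ℂ} {b : ℕ}
    (h₀ : ∀ i, (f₀ i).IsHomogeneous b)
    (h₁ : ∀ i, (f₁ i).IsHomogeneous b) (t : ℂ) (i : ι) : (pencil f₀ f₁ t i).IsHomogeneous b :=
  (homogeneousSubmodule σ ℂ b).add_mem (Submodule.smul_mem _ _ (h₀ i))
    (Submodule.smul_mem _ _ (h₁ i))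

theorem macaulayMap_pencil {σ ι : Type*} [Fintype ι] {f₀ f₁ : ι → MvPolynomial σ ℂ}
    (t : ℂ) (d : ℕ) :
    macaulayMap (pencil f₀ f₁ t) d =
      macaulayMap f₀ d + t • (macaulayMap f₁ d - macaulayMap f₀ d) := by
  ext g
  rw [LinearMap.add_apply, LinearMap.smul_apply, LinearMap.sub_apply, macaulayMap_apply,
    macaulayMap_apply, macaulayMap_apply, ← Finset.sum_sub_distrib, Finset.smul_sum,
    ← Finset.sum_add_distrib]
  congr 1
  refine Finset.sum_congr rfl fun i _ => ?_
  simp only [pencil, MvPolynomial.smul_eq_C_mul, map_sub, C_1]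
  ring

theorem finite_setOf_finrank_map_pencil_lt (h₀ : ∀ i, (f₀ i).IsHomogeneous b)
    (h₁ : ∀ i, (f₁ i).IsHomogeneous b) (t₀ : ℂ) (π : MvPolynomial σ ℂ →ₗ[ℂ] MvPolynomial σ ℂ)
    (d : ℕ) :
    {t : ℂ | Module.finrank ℂ ((gradedPiece (Ideal.span (Set.range (pencil f₀ f₁ t))) d).map π) <
      Module.finrank ℂ
        ((gradedPiece (Ideal.span (Set.range (pencil f₀ f₁ t₀))) d).map π)}.Finite := by
  rcases lt_or_ge d b with hd | hd
  · have h : ∀ t, Module.finrank ℂ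
        ((gradedPiece (Ideal.span (Set.range (pencil f₀ f₁ t))) d).map π) = 0 := by
      intro t
      rw [gradedPiece_span_range_eq_bot (isHomogeneous_pencil h₀ h₁ t) hd, Submodule.map_bot,
        finrank_bot]
    simp [h]
  · obtain ⟨d, rfl⟩ := Nat.exists_eq_add_of_le' hd
    have h : ∀ t, Module.finrank ℂ
        ((gradedPiece (Ideal.span (Set.range (pencil f₀ f₁ t))) (d + b)).map π) =
        Module.finrank ℂ (LinearMap.range
          (π ∘ₗ macaulayMap f₀ d + t • π ∘ₗ (macaulayMap f₁ d - macaulayMap f₀ d))) := by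
      intro t
      rw [← range_macaulayMap (isHomogeneous_pencil h₀ h₁ t), ← LinearMap.range_comp,
        macaulayMap_pencil, LinearMap.comp_add, LinearMap.comp_smul]
    simp only [h]
    exact finite_setOf_rank_lt _ _ _

theorem finrank_map_add_finrank_map_id_sub {V : Type*} [AddCommGroup V] [Module ℂ V]
    {π : V →ₗ[ℂ] V} (hπ : ∀ p, π (π p) = π p) {U : Submodule ℂ V} [FiniteDimensional ℂ U]
    (hU : ∀ p ∈ U, π p ∈ U) :
    Module.finrank ℂ (U.map π) + Module.finrank ℂ (U.map (LinearMap.id - π)) =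
      Module.finrank ℂ U := by
  have : U.map (LinearMap.id - π) = U ⊓ LinearMap.ker π := by
    apply le_antisymm
    · rintro _ ⟨p, hp, rfl⟩
      exact ⟨U.sub_mem hp (hU p hp), by simp [hπ]⟩
    · rintro p ⟨hp, hp'⟩
      exact ⟨p, hp, by simp [LinearMap.mem_ker.1 hp']⟩
  rw [this, finrank_map_add_finrank_inf_ker]

/-- Two complete intersections of forms of the same degree, joined by a pencil that is stable under
a projection, have isotypic parts of the same dimension. -/
theorem IsCI.finrank_map_eq (h₀ : ∀ i, (f₀ i).IsHomogeneous b)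
    (h₁ : ∀ i, (f₁ i).IsHomogeneous b) (hb : 0 < b) (hf₀ : IsCI f₀ fun _ => b)
    (hf₁ : IsCI f₁ fun _ => b) {π : MvPolynomial σ ℂ →ₗ[ℂ] MvPolynomial σ ℂ}
    (hπ : ∀ p, π (π p) = π p) (hstab : ∀ t d, ∀ p ∈ gradedPiece (Ideal.span
      (Set.range (pencil f₀ f₁ t))) d,
        π p ∈ gradedPiece (Ideal.span (Set.range (pencil f₀ f₁ t))) d)
    (d : ℕ) :
    Module.finrank ℂ ((gradedPiece (Ideal.span (Set.range f₀)) d).map π) =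
      Module.finrank ℂ ((gradedPiece (Ideal.span (Set.range f₁)) d).map π) := by
  set I : ℂ → Ideal (MvPolynomial σ ℂ) := fun t => Ideal.span (Set.range (pencil f₀ f₁ t)) with hI
  have hI₀ : I 0 = Ideal.span (Set.range f₀) := congrArg (fun f => Ideal.span (Set.range f)) (by
    ext i : 1
    simp [pencil])
  have hI₁ : I 1 = Ideal.span (Set.range f₁) := congrArg (fun f => Ideal.span (Set.range f)) (by
    ext i : 1
    simp [pencil])
  have hCI : ∀ u : ℂ, (u = 0 ∨ u = 1) → IsCI (pencil f₀ f₁ u) fun _ => b := by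
    rintro u (rfl | rfl)
    · exact hf₀.of_span_eq hI₀
    · exact hf₁.of_span_eq hI₁
  set bad : ℂ → (MvPolynomial σ ℂ →ₗ[ℂ] MvPolynomial σ ℂ) → ℕ → Set ℂ := fun u ρ d =>
    {t : ℂ | Module.finrank ℂ ((gradedPiece (I t) d).map ρ) <
      Module.finrank ℂ ((gradedPiece (I u) d).map ρ)} with hbad
  have hfin : ∀ u ρ d, (bad u ρ d).Finite := fun u ρ d =>
    finite_setOf_finrank_map_pencil_lt h₀ h₁ u ρ d
  have hcount : (⋃ d : ℕ, (bad 0 LinearMap.id d ∪ (bad 0 π d ∪ bad 0 (LinearMap.id - π) d) ∪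
      (bad 1 π d ∪ bad 1 (LinearMap.id - π) d))).Countable :=
    Set.countable_iUnion fun d => ((((hfin _ _ _).union ((hfin _ _ _).union (hfin _ _ _)))).union
      ((hfin _ _ _).union (hfin _ _ _))).countable
  obtain ⟨t, ht⟩ := (Set.ne_univ_iff_exists_notMem _).1
    (fun h => not_countable_complex (h ▸ hcount))
  simp only [Set.mem_iUnion, Set.mem_union, not_exists, not_or, hbad, Set.mem_ofPred_eq, not_lt]
    at ht
  have hbound := lexNonneg_hilb_range (isHomogeneous_pencil h₀ h₁ t) fun _ => hb
  have hdim : ∀ u : ℂ, (u = 0 ∨ u = 1) → ∀ d, pieceDim (I t) d = pieceDim (I u) d := by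
    have hz : hilb (I t) = hilb (I 0) := by
      have h := hCI 0 (Or.inl rfl)
      rw [IsCI] at h
      rw [← h] at hbound
      refine sub_eq_zero.1 (hbound.eq_zero_of_coeff_nonpos fun n => ?_)
      have : pieceDim (I 0) n ≤ pieceDim (I t) n := by
        have := (ht n).1.1
        rwa [Submodule.map_id, Submodule.map_id] at this
      simp only [hilb, map_sub, PowerSeries.coeff_mk]
      change _ - (pieceDim (I t) n : ℤ) - (_ - (pieceDim (I 0) n : ℤ)) ≤ 0
      omega
    intro u hu d
    have h2 : hilb (I u) = hilb (I 0) := (hCI u hu).trans (hCI 0 (Or.inl rfl)).symm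
    have h3 := congrArg (PowerSeries.coeff d) (hz.trans h2.symm)
    simp only [hilb, PowerSeries.coeff_mk] at h3
    omega
  have hsum : ∀ u, Module.finrank ℂ ((gradedPiece (I u) d).map π) +
      Module.finrank ℂ ((gradedPiece (I u) d).map (LinearMap.id - π)) = pieceDim (I u) d :=
    fun u => finrank_map_add_finrank_map_id_sub hπ (hstab u d)
  have e0 := hdim 0 (Or.inl rfl) d
  have e1 := hdim 1 (Or.inr rfl) d
  have s0 := hsum 0
  have s1 := hsum 1
  have st := hsum t
  obtain ⟨⟨-, h2, h3⟩, h4, h5⟩ := ht d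
  rw [← hI₀, ← hI₁]
  omega

end Deformation

section Isotypic

variable {α β : Type*}

/-- Permutation of the variables within the two blocks. -/
noncomputable def blockRename (w : Equiv.Perm α × Equiv.Perm β) :
    MvPolynomial (α ⊕ β) ℂ →ₐ[ℂ] MvPolynomial (α ⊕ β) ℂ :=
  rename (Equiv.Perm.sumCongrHom α β w)

theorem blockRename_mul (v w : Equiv.Perm α × Equiv.Perm β) (p : MvPolynomial (α ⊕ β) ℂ) :
    blockRename (v * w) p = blockRename v (blockRename w p) := by
  rw [blockRename, blockRename, blockRename, rename_rename, map_mul, Equiv.Perm.coe_mul]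

variable [Fintype α] [DecidableEq α]

/-- The character of `Perm α × Perm β` that is the sign on the first factor and trivial on the
second. -/
noncomputable def blockSign (w : Equiv.Perm α × Equiv.Perm β) : ℂ := ((Equiv.Perm.sign w.1 : ℤ) : ℂ)

theorem blockSign_mul (v w : Equiv.Perm α × Equiv.Perm β) :
    blockSign (v * w) = blockSign v * blockSign w := by
  simp [blockSign]

theorem blockSign_mul_self (w : Equiv.Perm α × Equiv.Perm β) : blockSign w * blockSign w = 1 := by
  rcases Int.units_eq_one_or (Equiv.Perm.sign w.1) with h | h <;> simp [blockSign, h]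

variable (α β) in
/-- The polynomials that are antisymmetric in the first block of variables and symmetric in the
second. -/
noncomputable def isotypic : Submodule ℂ (MvPolynomial (α ⊕ β) ℂ) where
  carrier := {p | ∀ w : Equiv.Perm α × Equiv.Perm β, blockRename w p = blockSign w • p}
  add_mem' hp hq w := by rw [map_add, hp w, hq w, smul_add]
  zero_mem' w := by rw [map_zero, smul_zero]
  smul_mem' c p hp w := by rw [map_smul, hp w, smul_comm]

theorem mem_isotypic {p : MvPolynomial (α ⊕ β) ℂ} :
    p ∈ isotypic α β ↔ ∀ w : Equiv.Perm α × Equiv.Perm β, blockRename w p = blockSign w • p :=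
  Iff.rfl

theorem mul_mem_isotypic {p : MvPolynomial (α ⊕ β) ℂ}
    (hp : ∀ w : Equiv.Perm (α ⊕ β), rename w p = p) {u : MvPolynomial (α ⊕ β) ℂ}
    (hu : u ∈ isotypic α β) : p * u ∈ isotypic α β := by
  intro w
  rw [map_mul, hu w, blockRename, hp, mul_smul_comm]

variable [Fintype β] [DecidableEq β]

variable (α β) in
/-- The projection to the isotypic part. -/
noncomputable def isoProj : MvPolynomial (α ⊕ β) ℂ →ₗ[ℂ] MvPolynomial (α ⊕ β) ℂ :=
  (Fintype.card (Equiv.Perm α × Equiv.Perm β) : ℂ)⁻¹ •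
    ∑ w : Equiv.Perm α × Equiv.Perm β, blockSign w • (blockRename w).toLinearMap

theorem isoProj_apply (p : MvPolynomial (α ⊕ β) ℂ) :
    isoProj α β p = (Fintype.card (Equiv.Perm α × Equiv.Perm β) : ℂ)⁻¹ •
      ∑ w : Equiv.Perm α × Equiv.Perm β, blockSign w • blockRename w p := by
  simp only [isoProj, LinearMap.smul_apply, LinearMap.sum_apply, AlgHom.toLinearMap_apply]

theorem isoProj_mem (p : MvPolynomial (α ⊕ β) ℂ) : isoProj α β p ∈ isotypic α β := by
  intro v
  have h : blockRename v (∑ w : Equiv.Perm α × Equiv.Perm β, blockSign w • blockRename w p) =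
      blockSign v • ∑ w : Equiv.Perm α × Equiv.Perm β, blockSign w • blockRename w p := by
    rw [map_sum, Finset.smul_sum]
    refine Fintype.sum_equiv (Equiv.mulLeft v) _ _ fun w => ?_
    rw [map_smul, Equiv.coe_mulLeft, blockRename_mul, blockSign_mul, smul_smul, ← mul_assoc,
      blockSign_mul_self, one_mul]
  rw [isoProj_apply, map_smul, h, smul_comm]

theorem isoProj_eq_self {p : MvPolynomial (α ⊕ β) ℂ} (hp : p ∈ isotypic α β) :
    isoProj α β p = p := by
  rw [isoProj_apply]
  simp only [mem_isotypic.1 hp, smul_smul, blockSign_mul_self, one_smul, Finset.sum_const,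
    Finset.card_univ]
  rw [← Nat.cast_smul_eq_nsmul ℂ, smul_smul, inv_mul_cancel₀, one_smul]
  exact Nat.cast_ne_zero.2 Fintype.card_ne_zero

theorem isoProj_mul {p : MvPolynomial (α ⊕ β) ℂ} (hp : ∀ w : Equiv.Perm (α ⊕ β), rename w p = p)
    (u : MvPolynomial (α ⊕ β) ℂ) : isoProj α β (p * u) = p * isoProj α β u := by
  rw [isoProj_apply, isoProj_apply, mul_smul_comm, Finset.mul_sum]
  congr 1
  refine Finset.sum_congr rfl fun w _ => ?_
  rw [map_mul, blockRename, hp, mul_smul_comm]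

theorem map_isoProj {U : Submodule ℂ (MvPolynomial (α ⊕ β) ℂ)}
    (hU : ∀ p ∈ U, isoProj α β p ∈ U) : U.map (isoProj α β) = U ⊓ isotypic α β := by
  apply le_antisymm
  · rintro _ ⟨p, hp, rfl⟩
    exact ⟨hU p hp, isoProj_mem p⟩
  · rintro p ⟨hp, hp'⟩
    exact ⟨p, hp, isoProj_eq_self hp'⟩

/-- An ideal stable under all permutations of the variables. -/
def PermStable {σ : Type*} (I : Ideal (MvPolynomial σ ℂ)) : Prop :=
  ∀ (w : Equiv.Perm σ), ∀ p ∈ I, rename w p ∈ I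

theorem permStable_span_range {σ ι : Type*} {f : ι → MvPolynomial σ ℂ}
    (h : ∀ (w : Equiv.Perm σ) (i : ι), ∃ j, rename w (f i) = f j) :
    PermStable (Ideal.span (Set.range f)) := by
  intro w
  change Ideal.span (Set.range f) ≤ (Ideal.span (Set.range f)).comap (rename w)
  rw [Ideal.span_le]
  rintro _ ⟨i, rfl⟩
  obtain ⟨j, hj⟩ := h w i
  change rename w (f i) ∈ Ideal.span (Set.range f)
  rw [hj]
  exact Ideal.subset_span ⟨j, rfl⟩

theorem PermStable.isoProj_mem_gradedPiece {I : Ideal (MvPolynomial (α ⊕ β) ℂ)}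
    (hI : PermStable I) (d : ℕ) {p : MvPolynomial (α ⊕ β) ℂ} (hp : p ∈ gradedPiece I d) :
    isoProj α β p ∈ gradedPiece I d := by
  rw [isoProj_apply]
  exact Submodule.smul_mem _ _ (Submodule.sum_mem _ fun w _ => Submodule.smul_mem _ _
    ⟨hI _ p hp.1, hp.2.rename_isHomogeneous⟩)

theorem PermStable.map_isoProj {I : Ideal (MvPolynomial (α ⊕ β) ℂ)} (hI : PermStable I) (d : ℕ) :
    (gradedPiece I d).map (isoProj α β) = gradedPiece I d ⊓ isotypic α β :=
  _root_.map_isoProj fun _ hp => hI.isoProj_mem_gradedPiece d hp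

/-- The dimension of the degree `d` part of the isotypic part of an ideal. -/
noncomputable def isoDim (I : Ideal (MvPolynomial (α ⊕ β) ℂ)) (d : ℕ) : ℕ :=
  Module.finrank ℂ (gradedPiece I d ⊓ isotypic α β : Submodule ℂ (MvPolynomial (α ⊕ β) ℂ))

/-- The Hilbert series of the isotypic part of the quotient by an ideal. -/
noncomputable def isoHilb (I : Ideal (MvPolynomial (α ⊕ β) ℂ)) : PowerSeries ℤ :=
  PowerSeries.mk fun d => (isoDim (⊤ : Ideal (MvPolynomial (α ⊕ β) ℂ)) d : ℤ) - isoDim I d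

theorem isoDim_sup_span_add {J : Ideal (MvPolynomial (α ⊕ β) ℂ)} (hJ : HomogIdeal J)
    (hJs : PermStable J) {f : MvPolynomial (α ⊕ β) ℂ} {e : ℕ} (hf : f.IsHomogeneous e)
    (hfs : ∀ w : Equiv.Perm (α ⊕ β), rename w f = f) (hcol : colonBy J f = J) (d : ℕ) :
    isoDim (J ⊔ Ideal.span {f}) (d + e) + isoDim J d =
      isoDim J (d + e) + isoDim (⊤ : Ideal (MvPolynomial (α ⊕ β) ℂ)) d := by
  set V := gradedPiece (⊤ : Ideal (MvPolynomial (α ⊕ β) ℂ)) d ⊓ isotypic α β with hV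
  set m := LinearMap.mulLeft ℂ f
  have h0 : gradedPiece (J ⊔ Ideal.span {f}) (d + e) ⊓ isotypic α β =
      (gradedPiece J (d + e) ⊓ isotypic α β) ⊔ V.map m := by
    rw [gradedPiece_sup_span_add hJ hf]
    apply le_antisymm
    · rintro p ⟨hp, hps⟩
      obtain ⟨x, hx, y, ⟨u, hu, rfl⟩, rfl⟩ := Submodule.mem_sup.1 hp
      have h := isoProj_eq_self hps
      rw [map_add] at h
      have h2 : isoProj α β (f * u) = f * isoProj α β u := isoProj_mul hfs u
      have hu' : u ∈ gradedPiece (⊤ : Ideal (MvPolynomial (α ⊕ β) ℂ)) d := ⟨trivial, hu⟩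
      have htop : PermStable (⊤ : Ideal (MvPolynomial (α ⊕ β) ℂ)) := fun _ _ _ => trivial
      rw [← h]
      refine Submodule.add_mem_sup ⟨hJs.isoProj_mem_gradedPiece _ hx, isoProj_mem _⟩
        ⟨isoProj α β u, ⟨htop.isoProj_mem_gradedPiece d hu', isoProj_mem _⟩, h2.symm⟩
    · refine sup_le (inf_le_inf_right _ le_sup_left) ?_
      rintro _ ⟨u, hu, rfl⟩
      exact ⟨Submodule.mem_sup_right ⟨u, hu.1.2, rfl⟩, mul_mem_isotypic hfs hu.2⟩
  have h2 : (gradedPiece J (d + e) ⊓ isotypic α β) ⊓ V.map m =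
      (gradedPiece J d ⊓ isotypic α β).map m := by
    ext p
    constructor
    · rintro ⟨hp, u, hu, rfl⟩
      refine ⟨u, ⟨⟨?_, hu.1.2⟩, hu.2⟩, rfl⟩
      have : u ∈ colonBy J f := hp.1.1
      rwa [hcol] at this
    · rintro ⟨u, hu, rfl⟩
      refine ⟨⟨⟨J.mul_mem_left _ hu.1.1, ?_⟩, mul_mem_isotypic hfs hu.2⟩, u,
        ⟨⟨trivial, hu.1.2⟩, hu.2⟩, rfl⟩
      rw [add_comm]
      exact hf.mul hu.1.2
  have h3 : (gradedPiece J d ⊓ isotypic α β) ⊓ LinearMap.ker m = V ⊓ LinearMap.ker m := by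
    ext p
    constructor
    · rintro ⟨hp, hm⟩
      exact ⟨⟨⟨trivial, hp.1.2⟩, hp.2⟩, hm⟩
    · rintro ⟨hp, hm⟩
      refine ⟨⟨⟨?_, hp.1.2⟩, hp.2⟩, hm⟩
      have : f * p = 0 := hm
      have : p ∈ colonBy J f := by
        rw [mem_colonBy, this]
        exact J.zero_mem
      rwa [hcol] at this
  have h1 := Submodule.finrank_sup_add_finrank_inf_eq (gradedPiece J (d + e) ⊓ isotypic α β)
    (V.map m)
  have h4 := finrank_map_add_finrank_inf_ker m V
  have h5 := finrank_map_add_finrank_inf_ker m (gradedPiece J d ⊓ isotypic α β)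
  rw [h2, ← h0] at h1
  rw [h3] at h5
  unfold isoDim
  rw [← hV]
  omega

theorem isoHilb_sup_span {J : Ideal (MvPolynomial (α ⊕ β) ℂ)} (hJ : HomogIdeal J)
    (hJs : PermStable J) {f : MvPolynomial (α ⊕ β) ℂ} {e : ℕ} (hf : f.IsHomogeneous e)
    (hfs : ∀ w : Equiv.Perm (α ⊕ β), rename w f = f) (hcol : colonBy J f = J) :
    isoHilb (J ⊔ Ideal.span {f}) = (1 - PowerSeries.X ^ e) * isoHilb J := by
  ext d
  rw [sub_mul, one_mul, map_sub, PowerSeries.coeff_X_pow_mul']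
  simp only [isoHilb, PowerSeries.coeff_mk]
  split_ifs with h
  · obtain ⟨d, rfl⟩ := Nat.exists_eq_add_of_le' h
    have := isoDim_sup_span_add hJ hJs hf hfs hcol d
    rw [Nat.add_sub_cancel]
    omega
  · rw [sub_zero, isoDim, isoDim, isoDim, gradedPiece_sup_span_of_lt hJ hf (not_le.1 h)]

theorem colonBy_pow_eq {σ : Type*} {J : Ideal (MvPolynomial σ ℂ)} {f : MvPolynomial σ ℂ}
    (h : colonBy J f = J) (n : ℕ) : colonBy J (f ^ n) = J := by
  refine le_antisymm (fun u hu => ?_) (le_colonBy _ _)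
  rw [mem_colonBy] at hu
  induction n with
  | zero => simpa using hu
  | succ n ih =>
    apply ih
    rw [← h, mem_colonBy, ← mul_assoc, ← pow_succ']
    exact hu

theorem permStable_singularIdeal {σ : Type*} [Fintype σ] (b : ℕ) : PermStable (singularIdeal σ b) :=
  permStable_span_range fun w i => ⟨w i, rename_singularVector b w i⟩

/-- The ideal generated by the singular vectors and the sum of the variables. -/
noncomputable def singularSumIdeal (σ : Type*) [Fintype σ] (b : ℕ) : Ideal (MvPolynomial σ ℂ) :=
  singularIdeal σ b ⊔ Ideal.span {varSum σ}

variable [Nonempty (α ⊕ β)]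

theorem isoHilb_theta {b : ℕ} (hb : 0 < b) (hab : (Fintype.card (α ⊕ β)).Coprime b) :
    isoHilb (Ideal.span (Set.range (theta b : α ⊕ β → _))) =
      isoHilb (Ideal.span (Set.range fun i : α ⊕ β => (X i : MvPolynomial (α ⊕ β) ℂ) ^ b)) := by
  have hstab : ∀ t, PermStable (Ideal.span (Set.range
      (pencil (theta b) (fun i : α ⊕ β => (X i : MvPolynomial (α ⊕ β) ℂ) ^ b) t))) := fun t =>
    permStable_span_range fun w i => ⟨w i, by
      rw [pencil, map_add, map_smul, map_smul, rename_theta, map_pow, rename_X, pencil]⟩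
  have h := IsCI.finrank_map_eq (fun i => isHomogeneous_theta b i)
    (fun i : α ⊕ β => isHomogeneous_X_pow i b) hb (isCI_theta hb hab) (isCI_X_pow hb)
    (π := isoProj α β) (fun p => isoProj_eq_self (isoProj_mem p))
    fun t d p hp => (hstab t).isoProj_mem_gradedPiece d hp
  ext d
  have hd := h d
  rw [(permStable_span_range fun w i => ⟨w i, rename_theta b w i⟩ :
    PermStable (Ideal.span (Set.range (theta b : α ⊕ β → _)))).map_isoProj,
    (permStable_span_range fun w i => ⟨w i, by rw [map_pow, rename_X]⟩ : PermStable (Ideal.span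
      (Set.range fun i : α ⊕ β => (X i : MvPolynomial (α ⊕ β) ℂ) ^ b))).map_isoProj] at hd
  rw [isoHilb, isoHilb, PowerSeries.coeff_mk, PowerSeries.coeff_mk, isoDim, isoDim, isoDim, hd]

theorem isoHilb_singularSumIdeal {b : ℕ} (hb : 0 < b) (hab : (Fintype.card (α ⊕ β)).Coprime b) :
    (1 - PowerSeries.X ^ b) * isoHilb (singularSumIdeal (α ⊕ β) b) =
      (1 - PowerSeries.X) *
        isoHilb (Ideal.span (Set.range fun i : α ⊕ β => (X i : MvPolynomial (α ⊕ β) ℂ) ^ b)) := by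
  have hcol := colonBy_varSum (σ := α ⊕ β) hb hab
  have hh := homogIdeal_singularIdeal (σ := α ⊕ β) b
  have hs := permStable_singularIdeal (σ := α ⊕ β) b
  rw [← isoHilb_theta hb hab, span_theta hb, singularSumIdeal,
    isoHilb_sup_span hh hs isHomogeneous_varSum (fun w => rename_varSum w) hcol,
    isoHilb_sup_span hh hs (e := b) (by simpa using isHomogeneous_varSum.pow b)
      (fun w => by rw [map_pow, rename_varSum]) (colonBy_pow_eq hcol b)]
  ring

end Isotypic

section MonomialTypes

theorem exists_perm_of_map_univ_eq {α γ : Type*} [Fintype α] {f g : α → γ}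
    (h : Finset.univ.val.map f = Finset.univ.val.map g) :
    ∃ e : Equiv.Perm α, ∀ i, g (e i) = f i := by
  classical
  have hc : ∀ c, Nonempty ({a // f a = c} ≃ {a // g a = c}) := by
    intro c
    have h1 := congrArg (Multiset.count c) h
    rw [Multiset.count_map, Multiset.count_map] at h1
    rw [← Fintype.card_eq, Fintype.card_subtype, Fintype.card_subtype]
    simp_rw [eq_comm (a := c)] at h1
    exact h1
  exact ⟨Equiv.ofFiberEquiv fun c => (hc c).some, fun i => Equiv.ofFiberEquiv_map _ i⟩

theorem exists_map_univ_eq {α γ : Type*} [Fintype α] {A : Multiset γ}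
    (h : Multiset.card A = Fintype.card α) : ∃ f : α → γ, Finset.univ.val.map f = A := by
  obtain ⟨l, rfl⟩ := Quot.exists_rep A
  have hl : l.length = Fintype.card α := h
  let e := Fintype.equivFinOfCardEq hl.symm
  refine ⟨fun i => l.get (e i), ?_⟩
  have : (Finset.univ.val.map fun i => l.get (e i)) =
      (Finset.univ.val.map e).map l.get := by
    rw [Multiset.map_map]
    rfl
  rw [this, Multiset.map_univ_val_equiv, Fin.univ_val_map, List.ofFn_get]
  rfl

variable {α β : Type*}

theorem coeff_mapDomain_blockRename (w : Equiv.Perm α × Equiv.Perm β)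
    (p : MvPolynomial (α ⊕ β) ℂ) (m : α ⊕ β →₀ ℕ) :
    coeff (m.mapDomain (Equiv.Perm.sumCongrHom α β w)) (blockRename w p) = coeff m p :=
  coeff_rename_mapDomain _ (Equiv.injective _) _ _

theorem coeff_mapDomain_of_mem_isotypic [Fintype α] [DecidableEq α] {p : MvPolynomial (α ⊕ β) ℂ}
    (hp : p ∈ isotypic α β)
    (w : Equiv.Perm α × Equiv.Perm β) (m : α ⊕ β →₀ ℕ) :
    blockSign w * coeff (m.mapDomain (Equiv.Perm.sumCongrHom α β w)) p = coeff m p := by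
  rw [← coeff_mapDomain_blockRename w p m, mem_isotypic.1 hp w, coeff_smul, smul_eq_mul]

variable [Fintype α] [Fintype β]

/-- The pair of multisets of exponents of a monomial in two blocks of variables. -/
def exponentType (m : α ⊕ β →₀ ℕ) : Multiset ℕ × Multiset ℕ :=
  (Finset.univ.val.map fun i => m (Sum.inl i), Finset.univ.val.map fun j => m (Sum.inr j))

theorem exists_exponentType_eq {t : Multiset ℕ × Multiset ℕ}
    (h1 : Multiset.card t.1 = Fintype.card α) (h2 : Multiset.card t.2 = Fintype.card β) :
    ∃ m : α ⊕ β →₀ ℕ, exponentType m = t := by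
  obtain ⟨f, hf⟩ := exists_map_univ_eq h1
  obtain ⟨g, hg⟩ := exists_map_univ_eq h2
  exact ⟨Finsupp.equivFunOnFinite.symm (Sum.elim f g), Prod.ext hf hg⟩

theorem exists_mapDomain_eq {m m' : α ⊕ β →₀ ℕ} (h : exponentType m = exponentType m') :
    ∃ w : Equiv.Perm α × Equiv.Perm β,
      m.mapDomain (Equiv.Perm.sumCongrHom α β w) = m' := by
  obtain ⟨e1, h1⟩ := exists_perm_of_map_univ_eq (congrArg Prod.fst h)
  obtain ⟨e2, h2⟩ := exists_perm_of_map_univ_eq (congrArg Prod.snd h)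
  refine ⟨(e1, e2), Finsupp.ext fun x => ?_⟩
  rw [Finsupp.mapDomain_equiv_apply]
  rcases x with i | j
  · simpa using (h1 (e1.symm i)).symm
  · simpa using (h2 (e2.symm j)).symm

theorem exponentType_mapDomain (m : α ⊕ β →₀ ℕ) (w : Equiv.Perm α × Equiv.Perm β) :
    exponentType (m.mapDomain (Equiv.Perm.sumCongrHom α β w)) = exponentType m := by
  have h : ∀ x, m.mapDomain (Equiv.Perm.sumCongrHom α β w) x =
      m ((Equiv.Perm.sumCongrHom α β w).symm x) := fun x => Finsupp.mapDomain_equiv_apply m x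
  refine Prod.ext ?_ ?_
  · change Finset.univ.val.map _ = _
    simp only [h]
    have := Multiset.map_map (fun i => m (Sum.inl i)) w.1.symm Finset.univ.val
    rw [Multiset.map_univ_val_equiv] at this
    exact this.symm
  · change Finset.univ.val.map _ = _
    simp only [h]
    have := Multiset.map_map (fun i => m (Sum.inr i)) w.2.symm Finset.univ.val
    rw [Multiset.map_univ_val_equiv] at this
    exact this.symm

variable [DecidableEq α]

theorem coeff_eq_zero_of_exponentType_eq {p : MvPolynomial (α ⊕ β) ℂ} (hp : p ∈ isotypic α β)
    {m m' : α ⊕ β →₀ ℕ} (h : exponentType m = exponentType m') (h0 : coeff m p = 0) :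
    coeff m' p = 0 := by
  obtain ⟨w, rfl⟩ := exists_mapDomain_eq h
  have h1 := coeff_mapDomain_of_mem_isotypic hp w m
  rw [h0, mul_eq_zero] at h1
  refine h1.resolve_left fun h2 => ?_
  have := blockSign_mul_self w
  rw [h2, zero_mul] at this
  exact zero_ne_one this

theorem exponentType_fst_nodup_of_coeff_ne_zero {p : MvPolynomial (α ⊕ β) ℂ}
    (hp : p ∈ isotypic α β) {m : α ⊕ β →₀ ℕ} (h0 : coeff m p ≠ 0) :
    (exponentType m).1.Nodup := by
  classical
  refine Fintype.nodup_map_univ_iff_injective.2 fun i j hij => ?_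
  by_contra hne
  have hm : m.mapDomain (Equiv.Perm.sumCongrHom α β (Equiv.swap i j, 1)) = m := by
    refine Finsupp.ext fun x => ?_
    rw [Finsupp.mapDomain_equiv_apply]
    rcases x with x | x
    · change m (Sum.inl ((Equiv.swap i j).symm x)) = _
      rw [Equiv.symm_swap, Equiv.swap_apply_def]
      split_ifs with h1 h2
      · rw [h1]; exact hij.symm
      · rw [h2]; exact hij
      · rfl
    · rfl
  have h1 := coeff_mapDomain_of_mem_isotypic hp (Equiv.swap i j, 1) m
  rw [hm, blockSign, Equiv.Perm.sign_swap hne] at h1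
  apply h0
  push_cast at h1
  linear_combination (-1 / 2 : ℂ) * h1

theorem blockSign_eq_one_of_mapDomain_eq {m : α ⊕ β →₀ ℕ} (h : (exponentType m).1.Nodup)
    {w : Equiv.Perm α × Equiv.Perm β} (hw : m.mapDomain (Equiv.Perm.sumCongrHom α β w) = m) :
    blockSign w = 1 := by
  have hi := Fintype.nodup_map_univ_iff_injective.1 h
  have : w.1 = 1 := by
    ext1 i
    have := DFunLike.congr_fun hw (Sum.inl (w.1 i))
    rw [Finsupp.mapDomain_equiv_apply] at this
    apply hi
    change m (Sum.inl (w.1 i)) = m (Sum.inl i)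
    rw [← this]
    change m (Sum.inl (w.1.symm (w.1 i))) = _
    rw [Equiv.symm_apply_apply]
  simp [blockSign, this]

variable [DecidableEq β]

theorem coeff_isoProj_monomial_of_ne {m m' : α ⊕ β →₀ ℕ} (h : exponentType m' ≠ exponentType m) :
    coeff m' (isoProj α β (monomial m 1)) = 0 := by
  rw [isoProj_apply, coeff_smul, coeff_sum, Finset.sum_eq_zero, smul_zero]
  intro w _
  rw [coeff_smul, blockRename, rename_monomial, coeff_monomial, if_neg, smul_zero]
  rintro rfl
  exact h (exponentType_mapDomain m w)

theorem coeff_isoProj_monomial_ne_zero {m : α ⊕ β →₀ ℕ} (h : (exponentType m).1.Nodup) :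
    coeff m (isoProj α β (monomial m 1)) ≠ 0 := by
  classical
  have h1 : ∀ w : Equiv.Perm α × Equiv.Perm β,
      coeff m (blockSign w • blockRename w (monomial m (1 : ℂ))) =
        if m.mapDomain (Equiv.Perm.sumCongrHom α β w) = m then 1 else 0 := by
    intro w
    rw [coeff_smul, blockRename, rename_monomial, coeff_monomial]
    split_ifs with hw
    · rw [blockSign_eq_one_of_mapDomain_eq h hw, one_smul]
    · rw [smul_zero]
  rw [isoProj_apply, coeff_smul, coeff_sum, smul_eq_mul, Finset.sum_congr rfl fun w _ => h1 w,
    Finset.sum_boole]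
  refine mul_ne_zero (inv_ne_zero (Nat.cast_ne_zero.2 Fintype.card_ne_zero))
    (Nat.cast_ne_zero.2 (Finset.card_ne_zero.2 ⟨1, ?_⟩))
  rw [Finset.mem_filter, map_one]
  exact ⟨Finset.mem_univ _, Finsupp.mapDomain_id⟩

/-- The isotypic polynomials supported on a given finite set of exponent types have a basis
indexed by these types. -/
theorem finrank_eq_card_exponentTypes {T : Finset (Multiset ℕ × Multiset ℕ)}
    (hT : ∀ t ∈ T, Multiset.card t.1 = Fintype.card α ∧ Multiset.card t.2 = Fintype.card β ∧
      t.1.Nodup) {U : Submodule ℂ (MvPolynomial (α ⊕ β) ℂ)}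
    (hU : ∀ p, p ∈ U ↔ p ∈ isotypic α β ∧ ∀ m, coeff m p ≠ 0 → exponentType m ∈ T) :
    Module.finrank ℂ U = T.card := by
  classical
  have hr : ∀ t : T, ∃ m : α ⊕ β →₀ ℕ, exponentType m = t := fun t =>
    exists_exponentType_eq (hT t t.2).1 (hT t t.2).2.1
  choose r hr using hr
  let φ : U →ₗ[ℂ] (T → ℂ) := LinearMap.pi fun t => (lcoeff ℂ (r t)).comp U.subtype
  have hφ : ∀ p t, φ p t = coeff (r t) p.1 := fun _ _ => rfl
  have hinj : Function.Injective φ := by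
    rw [← LinearMap.ker_eq_bot, LinearMap.ker_eq_bot']
    intro p hp
    refine Subtype.ext (MvPolynomial.ext _ _ fun m => ?_)
    rw [Submodule.coe_zero, coeff_zero]
    by_contra hm
    have ht := ((hU p).1 p.2).2 m hm
    refine hm (coeff_eq_zero_of_exponentType_eq ((hU p).1 p.2).1 (hr ⟨_, ht⟩) ?_)
    rw [← hφ, hp]
    rfl
  have hsurj : Function.Surjective φ := by
    rw [← LinearMap.range_eq_top, eq_top_iff, ← (Pi.basisFun ℂ T).span_eq, Submodule.span_le]
    rintro _ ⟨t, rfl⟩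
    have hmem : isoProj α β (monomial (r t) 1) ∈ U := by
      refine (hU _).2 ⟨isoProj_mem _, fun m hm => ?_⟩
      have : exponentType m = exponentType (r t) := by
        by_contra h
        exact hm (coeff_isoProj_monomial_of_ne h)
      rw [this, hr]
      exact t.2
    have hne : coeff (r t) (isoProj α β (monomial (r t) 1)) ≠ 0 :=
      coeff_isoProj_monomial_ne_zero (by rw [hr]; exact (hT t t.2).2.2)
    refine ⟨(coeff (r t) (isoProj α β (monomial (r t) 1)))⁻¹ • ⟨_, hmem⟩, ?_⟩
    ext t'
    rw [map_smul, Pi.smul_apply, hφ, Pi.basisFun_apply, smul_eq_mul, Pi.single_apply]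
    split_ifs with h
    · rw [h, inv_mul_cancel₀ hne]
    · refine mul_eq_zero_of_right _ (coeff_isoProj_monomial_of_ne ?_)
      rw [hr, hr]
      exact fun h' => h (Subtype.ext h')
  rw [(LinearEquiv.ofBijective φ ⟨hinj, hsurj⟩).finrank_eq, Module.finrank_fintype_fun_eq_card,
    Fintype.card_coe]

end MonomialTypes

section Counting

/-- The generating function of the `n`-element subsets of `{0, …, b - 1}` by sum. -/
noncomputable def subsetGen (n b : ℕ) : Polynomial ℤ :=
  ∑ S ∈ Finset.powersetCard n (Finset.range b), Polynomial.X ^ S.val.sum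

/-- The generating function of the `n`-element multisets in `{0, …, b - 1}` by sum. -/
noncomputable def multisetGen (n b : ℕ) : Polynomial ℤ :=
  ∑ M ∈ (Finset.range b).sym n, Polynomial.X ^ (M : Multiset ℕ).sum

/-- The exponent types of total degree `d` with exponents less than `b`, the first multiset being
a set. -/
def exponentTypes (k l b d : ℕ) : Finset (Multiset ℕ × Multiset ℕ) :=
  ((Finset.powersetCard k (Finset.range b) ×ˢ (Finset.range b).sym l).filter fun t =>
    t.1.val.sum + (t.2 : Multiset ℕ).sum = d).image fun t => (t.1.val, (t.2 : Multiset ℕ))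

theorem card_exponentTypes (k l b d : ℕ) :
    ((exponentTypes k l b d).card : ℤ) = (subsetGen k b * multisetGen l b).coeff d := by
  rw [exponentTypes, Finset.card_image_of_injective, subsetGen, multisetGen,
    Finset.sum_mul_sum, ← Finset.sum_product', Polynomial.finsetSum_coeff]
  · simp only [← pow_add, Polynomial.coeff_X_pow, eq_comm (a := d)]
    rw [Finset.sum_boole]
  · intro t t' h
    exact Prod.ext (Finset.val_injective (congrArg Prod.fst h))
      (Sym.coe_injective (congrArg Prod.snd h))

theorem mem_exponentTypes {k l b d : ℕ} {t : Multiset ℕ × Multiset ℕ} :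
    t ∈ exponentTypes k l b d ↔ (Multiset.card t.1 = k ∧ Multiset.card t.2 = l ∧ t.1.Nodup) ∧
      (∀ x ∈ t.1 + t.2, x < b) ∧ t.1.sum + t.2.sum = d := by
  rw [exponentTypes, Finset.mem_image]
  constructor
  · rintro ⟨⟨S, M⟩, h, rfl⟩
    rw [Finset.mem_filter, Finset.mem_product, Finset.mem_powersetCard, Finset.mem_sym_iff] at h
    obtain ⟨⟨⟨hS, hk⟩, hM⟩, hd⟩ := h
    refine ⟨⟨hk, M.2, S.nodup⟩, fun x hx => ?_, hd⟩
    rcases Multiset.mem_add.1 hx with h | h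
    · exact Finset.mem_range.1 (hS h)
    · exact Finset.mem_range.1 (hM x h)
  · rintro ⟨⟨hk, hl, hn⟩, hb, hd⟩
    refine ⟨(⟨t.1, hn⟩, ⟨t.2, hl⟩), ?_, rfl⟩
    rw [Finset.mem_filter, Finset.mem_product, Finset.mem_powersetCard, Finset.mem_sym_iff]
    exact ⟨⟨⟨fun x hx => Finset.mem_range.2 (hb x (Multiset.mem_add.2 (Or.inl hx))), hk⟩,
      fun x hx => Finset.mem_range.2 (hb x (Multiset.mem_add.2 (Or.inr hx)))⟩, hd⟩

variable {α β : Type*} [Fintype α] [Fintype β]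

theorem forall_mem_exponentType {m : α ⊕ β →₀ ℕ} {P : ℕ → Prop} :
    (∀ x ∈ (exponentType m).1 + (exponentType m).2, P x) ↔ ∀ i, P (m i) := by
  simp [exponentType, or_imp, forall_and]

theorem exponentType_sum_add_sum (m : α ⊕ β →₀ ℕ) :
    (exponentType m).1.sum + (exponentType m).2.sum = m.degree := by
  rw [Finsupp.degree_eq_sum, Fintype.sum_sum_type]
  rfl

theorem mem_exponentTypes_exponentType {m : α ⊕ β →₀ ℕ} {b d : ℕ} :
    exponentType m ∈ exponentTypes (Fintype.card α) (Fintype.card β) b d ↔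
      (exponentType m).1.Nodup ∧ (∀ i, m i < b) ∧ m.degree = d := by
  rw [mem_exponentTypes, forall_mem_exponentType (P := (· < b)), exponentType_sum_add_sum]
  simp [exponentType]

theorem mem_span_X_pow {σ : Type*} {b : ℕ} {p : MvPolynomial σ ℂ} :
    p ∈ Ideal.span (Set.range fun i : σ => (X i : MvPolynomial σ ℂ) ^ b) ↔
      ∀ m, coeff m p ≠ 0 → ∃ i, b ≤ m i := by
  have : (Set.range fun i : σ => (X i : MvPolynomial σ ℂ) ^ b) =
      (fun s => monomial s (1 : ℂ)) '' Set.range fun i => Finsupp.single i b := by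
    rw [← Set.range_comp]
    congr 1
    ext1 i
    rw [X_pow_eq_monomial]
    rfl
  rw [this, mem_ideal_span_monomial_image]
  simp [mem_support_iff]

variable [DecidableEq α] [DecidableEq β]

theorem isoHilb_span_X_pow (b : ℕ) :
    isoHilb (Ideal.span (Set.range fun i : α ⊕ β => (X i : MvPolynomial (α ⊕ β) ℂ) ^ b)) =
      (subsetGen (Fintype.card α) b * multisetGen (Fintype.card β) b : Polynomial ℤ) := by
  ext d
  rw [Polynomial.coeff_coe, ← card_exponentTypes, isoHilb, PowerSeries.coeff_mk]
  have hle : ∀ m : α ⊕ β →₀ ℕ, m.degree = d → ∀ i, m i < max b (d + 1) := fun m hm i =>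
    lt_max_of_lt_right (Nat.lt_succ_of_le (hm ▸ Finsupp.le_degree i m))
  have hsub : exponentTypes (Fintype.card α) (Fintype.card β) b d ⊆
      exponentTypes (Fintype.card α) (Fintype.card β) (max b (d + 1)) d := fun t ht => by
    rw [mem_exponentTypes] at ht ⊢
    exact ⟨ht.1, fun x hx => lt_max_of_lt_left (ht.2.1 x hx), ht.2.2⟩
  have h1 : isoDim (⊤ : Ideal (MvPolynomial (α ⊕ β) ℂ)) d =
      (exponentTypes (Fintype.card α) (Fintype.card β) (max b (d + 1)) d).card := by
    refine finrank_eq_card_exponentTypes (fun t ht => (mem_exponentTypes.1 ht).1) fun p => ?_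
    simp only [mem_exponentTypes_exponentType]
    constructor
    · rintro ⟨⟨-, hp⟩, hV⟩
      refine ⟨hV, fun m hm => ⟨exponentType_fst_nodup_of_coeff_ne_zero hV hm, ?_⟩⟩
      have := Finsupp.degree_eq_weight_one (R := ℕ) ▸ hp hm
      exact ⟨hle m this, this⟩
    · rintro ⟨hV, h⟩
      exact ⟨⟨trivial, fun m hm => Finsupp.degree_eq_weight_one (R := ℕ) ▸ (h m hm).2.2⟩, hV⟩
  have h2 : isoDim (Ideal.span (Set.range fun i : α ⊕ β => (X i : MvPolynomial (α ⊕ β) ℂ) ^ b)) d =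
      (exponentTypes (Fintype.card α) (Fintype.card β) (max b (d + 1)) d \
        exponentTypes (Fintype.card α) (Fintype.card β) b d).card := by
    refine finrank_eq_card_exponentTypes
      (fun t ht => (mem_exponentTypes.1 (Finset.sdiff_subset ht)).1) fun p => ?_
    simp only [mem_exponentTypes_exponentType, Finset.mem_sdiff]
    constructor
    · rintro ⟨⟨hI, hp⟩, hV⟩
      refine ⟨hV, fun m hm => ?_⟩
      have := Finsupp.degree_eq_weight_one (R := ℕ) ▸ hp hm
      obtain ⟨i, hi⟩ := mem_span_X_pow.1 hI m hm
      exact ⟨⟨exponentType_fst_nodup_of_coeff_ne_zero hV hm, hle m this, this⟩,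
        fun h => absurd (h.2.1 i) (not_lt.2 hi)⟩
    · rintro ⟨hV, h⟩
      refine ⟨⟨mem_span_X_pow.2 fun m hm => ?_,
        fun m hm => Finsupp.degree_eq_weight_one (R := ℕ) ▸ (h m hm).1.2.2⟩, hV⟩
      by_contra! hcon
      exact (h m hm).2 ⟨(h m hm).1.1, hcon, (h m hm).1.2.2⟩
  rw [h1, h2, Finset.cast_card_sdiff hsub]
  ring

end Counting

section QCounting

theorem subsetGen_zero_left (b : ℕ) : subsetGen 0 b = 1 := by
  simp [subsetGen]

theorem multisetGen_zero_left (b : ℕ) : multisetGen 0 b = 1 := by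
  rw [multisetGen, Finset.sym_zero, Finset.sum_singleton]
  exact pow_zero _

theorem multisetGen_succ_zero (l : ℕ) : multisetGen (l + 1) 0 = 0 := by
  rw [multisetGen, Finset.range_zero, Finset.sym_empty, Finset.sum_empty]

theorem subsetGen_self (k : ℕ) : subsetGen k k = Polynomial.X ^ k.choose 2 := by
  have h := Finset.powersetCard_self (Finset.range k)
  rw [Finset.card_range] at h
  rw [subsetGen, h, Finset.sum_singleton, Nat.choose_two_right, ← Finset.sum_range_id]
  simp [Finset.sum]

theorem subsetGen_succ_succ (k b : ℕ) :
    subsetGen (k + 1) (b + 1) = subsetGen (k + 1) b + Polynomial.X ^ b * subsetGen k b := by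
  rw [subsetGen, Finset.range_add_one, Finset.powersetCard_succ_insert Finset.notMem_range_self,
    Finset.sum_union, Finset.sum_image, subsetGen, subsetGen, Finset.mul_sum]
  · congr 1
    refine Finset.sum_congr rfl fun S hS => ?_
    have hb : b ∉ S := fun h =>
      Finset.notMem_range_self ((Finset.mem_powersetCard.1 hS).1 h)
    rw [Finset.insert_val_of_notMem hb, Multiset.sum_cons, pow_add]
  · intro S hS S' hS' h
    have hb : b ∉ S := fun h =>
      Finset.notMem_range_self ((Finset.mem_powersetCard.1 hS).1 h)
    have hb' : b ∉ S' := fun h =>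
      Finset.notMem_range_self ((Finset.mem_powersetCard.1 hS').1 h)
    rw [← Finset.erase_insert hb, ← Finset.erase_insert hb', h]
  · rw [Finset.disjoint_left]
    intro S hS hS'
    obtain ⟨S', -, rfl⟩ := Finset.mem_image.1 hS'
    exact Finset.notMem_range_self
      ((Finset.mem_powersetCard.1 hS).1 (Finset.mem_insert_self b S'))

theorem multisetGen_succ_succ (l b : ℕ) :
    multisetGen (l + 1) (b + 1) =
      multisetGen (l + 1) b + Polynomial.X ^ b * multisetGen l (b + 1) := by
  have h : (Finset.range (b + 1)).sym (l + 1) =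
      (Finset.range b).sym (l + 1) ∪ ((Finset.range (b + 1)).sym l).image (Sym.cons b) := by
    ext M
    simp only [Finset.mem_union, Finset.mem_image, Finset.mem_sym_iff]
    constructor
    · intro hM
      by_cases hb : b ∈ M
      · obtain ⟨M, rfl⟩ := Sym.exists_cons_of_mem hb
        exact Or.inr ⟨M, fun x hx => hM x (Sym.mem_cons_of_mem hx), rfl⟩
      · refine Or.inl fun x hx => Finset.mem_range.2 ?_
        have h1 := Finset.mem_range.1 (hM x hx)
        have h2 : x ≠ b := fun h => hb (h ▸ hx)
        omega
    · rintro (hM | ⟨M, hM, rfl⟩) x hx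
      · exact Finset.mem_range.2 (Nat.lt_succ_of_lt (Finset.mem_range.1 (hM x hx)))
      · rcases Sym.mem_cons.1 hx with rfl | hx
        · exact Finset.self_mem_range_succ x
        · exact hM x hx
  rw [multisetGen, h, Finset.sum_union, Finset.sum_image, multisetGen, multisetGen,
    Finset.mul_sum]
  · congr 1
    refine Finset.sum_congr rfl fun M _ => ?_
    rw [Sym.coe_cons, Multiset.sum_cons, pow_add]
  · intro M _ M' _ h
    exact (Sym.cons_inj_right b M M').1 h
  · rw [Finset.disjoint_left]
    intro M hM hM'
    obtain ⟨M', -, rfl⟩ := Finset.mem_image.1 hM'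
    exact Finset.notMem_range_self (Finset.mem_sym_iff.1 hM b (Sym.mem_cons_self b M'))

theorem qInt_add (m n : ℕ) : qInt (m + n) = qInt m + Polynomial.X ^ m * qInt n := by
  rw [qInt, Finset.sum_range_add, qInt, qInt, Finset.mul_sum]
  simp only [pow_add]

theorem one_sub_X_mul_qInt (n : ℕ) : (1 - Polynomial.X) * qInt n = 1 - Polynomial.X ^ n :=
  mul_neg_geom_sum _ n

theorem qFactorial_succ (n : ℕ) : qFactorial (n + 1) = qInt (n + 1) * qFactorial n := rfl

theorem eval_zero_qInt_succ (n : ℕ) : (qInt (n + 1)).eval 0 = 1 := by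
  rw [add_comm, qInt_add]
  simp [qInt]

theorem eval_zero_qFactorial (n : ℕ) : (qFactorial n).eval 0 = 1 := by
  induction n with
  | zero => simp [qFactorial]
  | succ n ih => rw [qFactorial_succ, Polynomial.eval_mul, ih, eval_zero_qInt_succ, mul_one]

theorem qInt_ne_zero {n : ℕ} (hn : 0 < n) : qInt n ≠ 0 := by
  obtain ⟨n, rfl⟩ := Nat.exists_eq_add_of_lt hn
  intro h
  have := eval_zero_qInt_succ (0 + n)
  rw [h, Polynomial.eval_zero] at this
  exact zero_ne_one this

theorem qFactorial_ne_zero (n : ℕ) : qFactorial n ≠ 0 := by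
  intro h
  have := eval_zero_qFactorial n
  rw [h, Polynomial.eval_zero] at this
  exact zero_ne_one this

theorem subsetGen_mul_qFactorial (k m : ℕ) :
    subsetGen k (k + m) * (qFactorial k * qFactorial m) =
      Polynomial.X ^ k.choose 2 * qFactorial (k + m) := by
  induction k generalizing m with
  | zero => simp [subsetGen_zero_left, qFactorial]
  | succ k ih =>
    induction m with
    | zero => rw [add_zero, subsetGen_self]; simp [qFactorial]
    | succ m ih' =>
      have h1 := ih (m + 1)
      have h2 : k + 1 + (m + 1) = k + 1 + m + 1 := rfl
      have h3 : k + (m + 1) = k + 1 + m := by ring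
      have h4 : (k + 1).choose 2 = k.choose 2 + k := by
        rw [Nat.choose_succ_succ, Nat.choose_one_right, add_comm]
      have h5 : qInt (k + 1 + m + 1) = qInt (m + 1) + Polynomial.X ^ (m + 1) * qInt (k + 1) := by
        rw [← qInt_add]
        congr 1
        ring
      rw [h3] at h1
      rw [h2, subsetGen_succ_succ, qFactorial_succ (k + 1 + m), h5]
      rw [qFactorial_succ k] at ih' ⊢
      rw [qFactorial_succ m] at h1 ⊢
      rw [h4] at ih' ⊢
      rw [pow_add] at ih' ⊢
      linear_combination qInt (m + 1) * ih' +
        Polynomial.X ^ (k + 1 + m) * qInt (k + 1) * h1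

theorem multisetGen_mul_qFactorial (l b : ℕ) :
    multisetGen l (b + 1) * (qFactorial l * qFactorial b) = qFactorial (b + l) := by
  induction l generalizing b with
  | zero => simp [multisetGen_zero_left, qFactorial]
  | succ l ih =>
    induction b with
    | zero =>
      have h := ih 0
      have h0 : qFactorial 0 = 1 := rfl
      rw [zero_add, h0, mul_one] at h
      rw [zero_add] at h
      rw [multisetGen_succ_succ, multisetGen_succ_zero, zero_add, zero_add, zero_add, h0,
        qFactorial_succ, pow_zero]
      linear_combination qInt (l + 1) * h
    | succ b ih' =>
      have h1 := ih (b + 1)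
      have h2 : b + 1 + (l + 1) = b + (l + 1) + 1 := by ring
      have h3 : b + 1 + l = b + (l + 1) := by ring
      have h5 : qInt (b + (l + 1) + 1) = qInt (b + 1) + Polynomial.X ^ (b + 1) * qInt (l + 1) := by
        rw [← qInt_add]
        congr 1
        ring
      rw [h3] at h1
      rw [h2, multisetGen_succ_succ, qFactorial_succ (b + (l + 1)), h5]
      rw [qFactorial_succ l] at ih' ⊢
      rw [qFactorial_succ b] at h1 ⊢
      linear_combination qInt (b + 1) * ih' + Polynomial.X ^ (b + 1) * qInt (l + 1) * h1

theorem eq_X_pow_mul_of_one_sub_mul_eq {k l b : ℕ} (hb : 0 < b) (hk : k ≤ b) {C : Polynomial ℤ}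
    (hC : qInt (b + l) * C * (qFactorial k * qFactorial l * qFactorial (b - k)) =
      qFactorial (b + l)) {H : PowerSeries ℤ}
    (hH : (1 - PowerSeries.X ^ b) * H = (1 - PowerSeries.X) *
      ((subsetGen k b * multisetGen l b : Polynomial ℤ) : PowerSeries ℤ)) :
    H = ((Polynomial.X ^ k.choose 2 * C : Polynomial ℤ) : PowerSeries ℤ) := by
  obtain ⟨b, rfl⟩ := Nat.exists_eq_succ_of_ne_zero hb.ne'
  rw [Nat.succ_eq_add_one] at *
  set D : Polynomial ℤ := (1 - Polynomial.X ^ (b + 1)) * qInt (b + 1 + l) *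
    (qFactorial k * qFactorial l * qFactorial (b + 1 - k) * qFactorial b) with hD
  have hD0 : D ≠ 0 := by
    have h1 : (1 - Polynomial.X : Polynomial ℤ) ≠ 0 := by
      intro h
      have := congrArg (Polynomial.eval 0) h
      simp at this
    rw [hD, ← one_sub_X_mul_qInt]
    simp only [ne_eq, mul_eq_zero, h1, qFactorial_ne_zero, qInt_ne_zero, hb, Nat.add_pos_left,
      or_self, not_false_eq_true]
  have hD1 : (D : PowerSeries ℤ) ≠ 0 := by
    rwa [Ne, Polynomial.coe_eq_zero_iff]
  apply mul_left_cancel₀ hD1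
  have e1 := subsetGen_mul_qFactorial k (b + 1 - k)
  rw [Nat.add_sub_of_le hk] at e1
  have e2 := multisetGen_mul_qFactorial l b
  have e3 : qFactorial (b + 1 + l) = qInt (b + 1 + l) * qFactorial (b + l) := by
    rw [Nat.add_right_comm, qFactorial_succ]
  have e4 : (1 - Polynomial.X) * (subsetGen k (b + 1) * multisetGen l (b + 1)) *
      (qInt (b + 1 + l) *
        (qFactorial k * qFactorial l * qFactorial (b + 1 - k) * qFactorial b)) =
      D * (Polynomial.X ^ k.choose 2 * C) := by
    rw [e3] at hC
    rw [hD, ← one_sub_X_mul_qInt]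
    rw [qFactorial_succ b] at e1
    linear_combination (1 - Polynomial.X) * qInt (b + 1 + l) * multisetGen l (b + 1) *
      qFactorial l * qFactorial b * e1 + (1 - Polynomial.X) * qInt (b + 1 + l) *
      Polynomial.X ^ k.choose 2 * qInt (b + 1) * qFactorial b * e2 -
      (1 - Polynomial.X) * qInt (b + 1) * Polynomial.X ^ k.choose 2 * qFactorial b * hC
  have e5 := congrArg (fun p : Polynomial ℤ => (p : PowerSeries ℤ)) e4
  simp only [hD, Polynomial.coe_mul, Polynomial.coe_sub, Polynomial.coe_one, Polynomial.coe_pow,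
    Polynomial.coe_X] at e5 hH ⊢
  linear_combination e5 + ((qInt (b + 1 + l) : Polynomial ℤ) : PowerSeries ℤ) *
    ((qFactorial k : PowerSeries ℤ) * (qFactorial l : PowerSeries ℤ) *
      (qFactorial (b + 1 - k) : PowerSeries ℤ) * (qFactorial b : PowerSeries ℤ)) * hH

end QCounting

section SeriesDerivation

variable {σ : Type*}

/-- The derivation of power series acting on the coefficients by a partial derivative. -/
noncomputable def pderivSeries (i : σ) :
    Derivation ℂ (PowerSeries (MvPolynomial σ ℂ)) (PowerSeries (MvPolynomial σ ℂ)) :=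
  Derivation.mk'
    { toFun := fun f => PowerSeries.mk fun n => pderiv i (PowerSeries.coeff n f)
      map_add' := fun f g => by ext1 n; simp
      map_smul' := fun c f => by ext1 n; simp }
    fun f g => by
      ext1 n
      simp only [LinearMap.coe_mk, AddHom.coe_mk, PowerSeries.coeff_mk, smul_eq_mul]
      rw [mul_comm g, map_add, PowerSeries.coeff_mul, PowerSeries.coeff_mul, PowerSeries.coeff_mul,
        map_sum, ← Finset.sum_add_distrib]
      refine Finset.sum_congr rfl fun p _ => ?_
      rw [Derivation.leibniz, PowerSeries.coeff_mk, PowerSeries.coeff_mk, smul_eq_mul, smul_eq_mul,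
        mul_comm (pderiv i _)]

theorem coeff_pderivSeries (i : σ) (f : PowerSeries (MvPolynomial σ ℂ)) (n : ℕ) :
    PowerSeries.coeff n (pderivSeries i f) = pderiv i (PowerSeries.coeff n f) :=
  PowerSeries.coeff_mk n fun m => pderiv i (PowerSeries.coeff m f)

theorem pderivSeries_X (i : σ) : pderivSeries i PowerSeries.X = 0 := by
  ext1 n
  rw [coeff_pderivSeries, PowerSeries.coeff_X]
  split_ifs <;> simp

theorem pderivSeries_C (i : σ) (p : MvPolynomial σ ℂ) :
    pderivSeries i (PowerSeries.C p) = PowerSeries.C (pderiv i p) := by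
  ext1 n
  rw [coeff_pderivSeries, PowerSeries.coeff_C, PowerSeries.coeff_C]
  split_ifs <;> simp

theorem pderivSeries_geomSeries_self (i : σ) :
    pderivSeries i (geomSeries (X i)) = PowerSeries.X * geomSeries (X i) * geomSeries (X i) := by
  have h0 := one_sub_mul_geomSeries (X i : MvPolynomial σ ℂ)
  have h := congrArg (pderivSeries i) h0
  simp only [Derivation.leibniz, map_sub, Derivation.map_one_eq_zero, pderivSeries_C,
    pderivSeries_X, pderiv_X_self, smul_eq_mul, map_one] at h
  linear_combination geomSeries (X i) * h - pderivSeries i (geomSeries (X i)) * h0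

theorem pderivSeries_geomSeries_of_ne {i j : σ} (h : j ≠ i) :
    pderivSeries i (geomSeries (X j)) = 0 := by
  ext1 n
  rw [coeff_pderivSeries, geomSeries, PowerSeries.coeff_mk, Derivation.leibniz_pow,
    pderiv_X_of_ne h]
  simp

theorem pderivSeries_binomPow_self (i : σ) (c : ℂ) :
    pderivSeries i (binomPow c (X i)) =
      -PowerSeries.C (C c) * PowerSeries.X * geomSeries (X i) * binomPow c (X i) := by
  have hX : (PowerSeries.C (X i : MvPolynomial σ ℂ)) ≠ 0 := by
    rw [Ne, map_eq_zero_iff _ PowerSeries.C_injective]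
    exact X_ne_zero i
  have h : PowerSeries.C (X i : MvPolynomial σ ℂ) * pderivSeries i (binomPow c (X i)) =
      PowerSeries.X * PowerSeries.derivative _ (binomPow c (X i)) := by
    ext1 n
    rw [PowerSeries.coeff_C_mul, coeff_pderivSeries, binomPow, PowerSeries.coeff_mk]
    cases n with
    | zero => simp
    | succ n =>
      rw [PowerSeries.coeff_succ_X_mul, PowerSeries.coeff_derivative, PowerSeries.coeff_mk,
        Derivation.map_smul, Derivation.leibniz_pow, pderiv_X_self]
      simp only [nsmul_eq_mul, smul_eq_mul, mul_one, MvPolynomial.smul_eq_C_mul]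
      push_cast
      ring
  apply mul_left_cancel₀ hX
  rw [h, derivative_binomPow, MvPolynomial.smul_eq_C_mul, map_mul]
  ring

theorem pderivSeries_binomPow_of_ne {i j : σ} (h : j ≠ i) (c : ℂ) :
    pderivSeries i (binomPow c (X j)) = 0 := by
  ext1 n
  rw [coeff_pderivSeries, binomPow, PowerSeries.coeff_mk, Derivation.map_smul,
    Derivation.leibniz_pow, pderiv_X_of_ne h]
  simp

variable [Fintype σ]

theorem pderivSeries_prodSeries (i : σ) (c : ℂ) :
    pderivSeries i (prodSeries σ c) =
      -PowerSeries.C (C c) * PowerSeries.X * genSeries c i := by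
  classical
  rw [genSeries, prodSeries, Derivation.prod_eq_sum_mul_prod _ _
    (fun j => if j = i then -PowerSeries.C (C c) * PowerSeries.X * geomSeries (X i) else 0)]
  · rw [Finset.sum_ite_eq', if_pos (Finset.mem_univ _)]
    ring
  · intro j
    split_ifs with h
    · rw [h, pderivSeries_binomPow_self]
    · rw [pderivSeries_binomPow_of_ne h, zero_mul]

theorem pderivSeries_genSeries_self (c : ℂ) (l : σ) :
    pderivSeries l (genSeries c l) =
      PowerSeries.C (C (1 - c)) * PowerSeries.X * (genSeries c l * geomSeries (X l)) := by
  rw [genSeries, Derivation.leibniz, pderivSeries_prodSeries, pderivSeries_geomSeries_self,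
    genSeries, smul_eq_mul, smul_eq_mul]
  simp only [map_sub, map_one]
  ring

theorem pderivSeries_genSeries_of_ne (c : ℂ) {i l : σ} (h : l ≠ i) :
    pderivSeries i (genSeries c l) =
      -PowerSeries.C (C c) * PowerSeries.X * (genSeries c l * geomSeries (X i)) := by
  rw [genSeries, Derivation.leibniz, pderivSeries_prodSeries, pderivSeries_geomSeries_of_ne h,
    genSeries, smul_eq_mul, smul_eq_mul]
  ring

theorem genSeries_sub_genSeries (c : ℂ) (l j : σ) :
    genSeries c l - genSeries c j =
      PowerSeries.C (X l - X j) * (PowerSeries.X * (genSeries c l * geomSeries (X j))) := by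
  have hl := one_sub_mul_geomSeries (X l : MvPolynomial σ ℂ)
  have hj := one_sub_mul_geomSeries (X j : MvPolynomial σ ℂ)
  rw [genSeries, genSeries, map_sub]
  linear_combination prodSeries σ c * geomSeries (X j) * hl -
    prodSeries σ c * geomSeries (X l) * hj

theorem X_mul_derivative_genSeries (c : ℂ) (l : σ) :
    PowerSeries.X * PowerSeries.derivative _ (genSeries c l) =
      PowerSeries.C (C (c * Fintype.card σ - 1)) * genSeries c l +
        genSeries c l * geomSeries (X l) -
          PowerSeries.C (C c) * ∑ j, genSeries c l * geomSeries (X j) := by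
  have h := X_mul_derivative_prodSeries (σ := σ) c
  have h0 := one_sub_mul_geomSeries (X l : MvPolynomial σ ℂ)
  have h1 : PowerSeries.derivative _ (geomSeries (X l : MvPolynomial σ ℂ)) =
      PowerSeries.C (X l) * geomSeries (X l) * geomSeries (X l) := by
    have h := congrArg (PowerSeries.derivative _) h0
    simp only [Derivation.leibniz, map_sub, Derivation.map_one_eq_zero, PowerSeries.derivative_C,
      PowerSeries.derivative_X, smul_eq_mul] at h
    linear_combination geomSeries (X l) * h -
      PowerSeries.derivative _ (geomSeries (X l : MvPolynomial σ ℂ)) * h0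
  have h2 : ∑ j, genSeries c l * geomSeries (X j) = geomSeries (X l) * ∑ j, genSeries c j := by
    rw [Finset.mul_sum]
    refine Finset.sum_congr rfl fun j _ => ?_
    rw [genSeries, genSeries]
    ring
  rw [Finset.sum_sub_distrib, Finset.sum_const, Finset.card_univ, nsmul_eq_mul] at h
  rw [h2]
  conv_lhs => rw [genSeries, Derivation.leibniz, smul_eq_mul, smul_eq_mul, h1]
  conv_rhs => rw [genSeries]
  simp only [map_sub, map_one, map_mul, map_natCast]
  linear_combination geomSeries (X l) * h - prodSeries σ c * geomSeries (X l) * h0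

end SeriesDerivation

section DividedDifference

variable {σ : Type*}

theorem X_sub_X_ne_zero {i j : σ} (h : i ≠ j) : (X i - X j : MvPolynomial σ ℂ) ≠ 0 :=
  sub_ne_zero.2 fun h' => h (X_injective h')

variable [DecidableEq σ]

theorem X_sub_X_dvd_sub_rename_swap (i j : σ) (f : MvPolynomial σ ℂ) :
    X i - X j ∣ f - rename (Equiv.swap i j) f := by
  induction f using MvPolynomial.induction_on with
  | C r => simp
  | add f g hf hg =>
    rw [map_add, add_sub_add_comm]
    exact dvd_add hf hg
  | mul_X f m hf =>
    have h : (X i - X j : MvPolynomial σ ℂ) ∣ X m - X (Equiv.swap i j m) := by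
      rcases eq_or_ne m i with rfl | hi
      · rw [Equiv.swap_apply_left]
      · rcases eq_or_ne m j with rfl | hj
        · rw [Equiv.swap_apply_right, ← neg_sub]
          exact (dvd_refl (X m - X i : MvPolynomial σ ℂ)).neg_left
        · rw [Equiv.swap_apply_of_ne_of_ne hi hj, sub_self]
          exact dvd_zero _
    rw [map_mul, rename_X]
    obtain ⟨p, hp⟩ := hf
    obtain ⟨q, hq⟩ := h
    exact ⟨p * X m + rename (Equiv.swap i j) f * q, by
      linear_combination X m * hp + rename (Equiv.swap i j) f * hq⟩

/-- The divided difference of a polynomial in the variables `i` and `j`. -/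
noncomputable def divDiffAux (i j : σ) (f : MvPolynomial σ ℂ) : MvPolynomial σ ℂ :=
  if i = j then 0 else (X_sub_X_dvd_sub_rename_swap i j f).choose

theorem mul_divDiffAux (i j : σ) (f : MvPolynomial σ ℂ) :
    (X i - X j) * divDiffAux i j f = f - rename (Equiv.swap i j) f := by
  rw [divDiffAux]
  split_ifs with h
  · simp [h]
  · exact (X_sub_X_dvd_sub_rename_swap i j f).choose_spec.symm

/-- The divided difference `f ↦ (f - s f) / (X i - X j)`, where `s` exchanges the variables `i` and
`j`. -/
noncomputable def divDiff (i j : σ) : Module.End ℂ (MvPolynomial σ ℂ) where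
  toFun := divDiffAux i j
  map_add' f g := by
    rcases eq_or_ne i j with h | h
    · simp [divDiffAux, h]
    apply mul_left_cancel₀ (X_sub_X_ne_zero h)
    rw [mul_add, mul_divDiffAux, mul_divDiffAux, mul_divDiffAux, map_add]
    ring
  map_smul' c f := by
    rcases eq_or_ne i j with h | h
    · simp [divDiffAux, h]
    apply mul_left_cancel₀ (X_sub_X_ne_zero h)
    rw [RingHom.id_apply, mul_smul_comm, mul_divDiffAux, mul_divDiffAux, map_smul, smul_sub]

theorem mul_divDiff (i j : σ) (f : MvPolynomial σ ℂ) :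
    (X i - X j) * divDiff i j f = f - rename (Equiv.swap i j) f :=
  mul_divDiffAux i j f

theorem divDiff_self (i : σ) (f : MvPolynomial σ ℂ) : divDiff i i f = 0 :=
  if_pos rfl

theorem divDiff_eq {i j : σ} (h : i ≠ j) {f g : MvPolynomial σ ℂ}
    (hg : (X i - X j) * g = f - rename (Equiv.swap i j) f) : divDiff i j f = g :=
  mul_left_cancel₀ (X_sub_X_ne_zero h) ((mul_divDiff i j f).trans hg.symm)

theorem divDiff_mul (i j : σ) (h f : MvPolynomial σ ℂ) :
    divDiff i j (h * f) = h * divDiff i j f + divDiff i j h * rename (Equiv.swap i j) f := by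
  rcases eq_or_ne i j with rfl | hij
  · simp [divDiff_self]
  apply divDiff_eq hij
  rw [map_mul]
  linear_combination h * mul_divDiff i j f + rename (Equiv.swap i j) f * mul_divDiff i j h

theorem divDiff_X (i j m : σ) : divDiff i j (X m : MvPolynomial σ ℂ) =
    (if i = m then 1 else 0) - if j = m then 1 else 0 := by
  rcases eq_or_ne i j with rfl | hij
  · simp [divDiff_self]
  apply divDiff_eq hij
  rw [rename_X]
  rcases eq_or_ne i m with rfl | hi
  · rw [Equiv.swap_apply_left, if_pos rfl, if_neg hij.symm]
    ring
  · rcases eq_or_ne j m with rfl | hj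
    · rw [Equiv.swap_apply_right, if_pos rfl, if_neg hi]
      ring
    · rw [Equiv.swap_apply_of_ne_of_ne hi.symm hj.symm, if_neg hi, if_neg hj]
      ring

theorem divDiff_swap (i j : σ) (f : MvPolynomial σ ℂ) : divDiff j i f = -divDiff i j f := by
  rcases eq_or_ne i j with rfl | hij
  · simp [divDiff_self]
  apply divDiff_eq hij.symm
  rw [Equiv.swap_comm, ← mul_divDiff i j f]
  ring

theorem rename_divDiff (w : Equiv.Perm σ) (i j : σ) (f : MvPolynomial σ ℂ) :
    rename w (divDiff i j f) = divDiff (w i) (w j) (rename w f) := by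
  rcases eq_or_ne i j with rfl | hij
  · simp [divDiff_self]
  symm
  apply divDiff_eq (w.injective.ne hij)
  have h := congrArg (rename w) (mul_divDiff i j f)
  rw [map_mul, map_sub, map_sub, rename_X, rename_X, rename_rename] at h
  rw [h, rename_rename]
  congr 2
  ext m : 1
  rw [rename_X, rename_X, Function.comp_apply, Function.comp_apply, ← Equiv.Perm.mul_apply,
    ← Equiv.Perm.mul_apply, Equiv.mul_swap_eq_swap_mul]

theorem divDiff_of_rename_eq {i j : σ} {f : MvPolynomial σ ℂ}
    (h : rename (Equiv.swap i j) f = f) : divDiff i j f = 0 := by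
  rcases eq_or_ne i j with rfl | hij
  · exact divDiff_self i f
  · exact divDiff_eq hij (by rw [h, sub_self, mul_zero])

theorem isHomogeneous_divDiff (i j : σ) {f : MvPolynomial σ ℂ} {d : ℕ}
    (hf : f.IsHomogeneous (d + 1)) : (divDiff i j f).IsHomogeneous d := by
  rcases eq_or_ne i j with rfl | hij
  · rw [divDiff_self]
    exact isHomogeneous_zero _ _ _
  have h1 : (X i - X j : MvPolynomial σ ℂ).IsHomogeneous 1 :=
    (isHomogeneous_X ℂ i).sub (isHomogeneous_X ℂ j)
  have h2 := homogeneousComponent_mul_of_isHomogeneous h1 (divDiff i j f) d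
  rw [mul_divDiff, homogeneousComponent_of_mem (n := d + 1)
    ((mem_homogeneousSubmodule _ _).2 (hf.sub hf.rename_isHomogeneous)), if_pos rfl] at h2
  rw [divDiff_eq hij h2.symm]
  exact homogeneousComponent_isHomogeneous _ _

theorem divDiff_of_isHomogeneous_zero (i j : σ) {f : MvPolynomial σ ℂ} (hf : f.IsHomogeneous 0) :
    divDiff i j f = 0 := by
  apply divDiff_of_rename_eq
  obtain ⟨r, rfl⟩ : ∃ r, f = C r :=
    ⟨_, totalDegree_eq_zero_iff_eq_C.1 (Nat.le_zero.1 hf.totalDegree_le)⟩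
  exact rename_C _ _

end DividedDifference

section Dunkl

variable {σ : Type*} [DecidableEq σ] [Fintype σ]

/-- The Dunkl operators of the symmetric group. -/
noncomputable def dunkl (c : ℂ) (i : σ) : Module.End ℂ (MvPolynomial σ ℂ) :=
  (pderiv i : Derivation ℂ (MvPolynomial σ ℂ) (MvPolynomial σ ℂ)).toLinearMap -
    c • ∑ j, divDiff i j

theorem dunkl_apply (c : ℂ) (i : σ) (f : MvPolynomial σ ℂ) :
    dunkl c i f = pderiv i f - C c * ∑ j, divDiff i j f := by
  rw [dunkl, LinearMap.sub_apply, LinearMap.smul_apply, LinearMap.sum_apply, smul_eq_C_mul]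
  rfl

theorem dunkl_mul (c : ℂ) (i : σ) (h f : MvPolynomial σ ℂ) :
    dunkl c i (h * f) = h * dunkl c i f + pderiv i h * f -
      C c * ∑ j, divDiff i j h * rename (Equiv.swap i j) f := by
  simp only [dunkl_apply, divDiff_mul, Finset.sum_add_distrib, Derivation.leibniz, smul_eq_mul,
    ← Finset.mul_sum]
  ring

theorem rename_dunkl (c : ℂ) (w : Equiv.Perm σ) (i : σ) (f : MvPolynomial σ ℂ) :
    rename w (dunkl c i f) = dunkl c (w i) (rename w f) := by
  rw [dunkl_apply, dunkl_apply, map_sub, map_mul, rename_C, map_sum, pderiv_rename w.injective,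
    ← Equiv.sum_comp w fun j => divDiff (w i) j (rename w f)]
  simp only [rename_divDiff]

theorem isHomogeneous_dunkl (c : ℂ) (i : σ) {f : MvPolynomial σ ℂ} {d : ℕ}
    (hf : f.IsHomogeneous (d + 1)) : (dunkl c i f).IsHomogeneous d := by
  rw [dunkl_apply]
  refine IsHomogeneous.sub ?_ ?_
  · simpa using hf.pderiv
  · simpa using (isHomogeneous_C σ c).mul
      (IsHomogeneous.sum Finset.univ _ d fun j _ => isHomogeneous_divDiff i j hf)

theorem dunkl_of_isHomogeneous_zero (c : ℂ) (i : σ) {f : MvPolynomial σ ℂ}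
    (hf : f.IsHomogeneous 0) : dunkl c i f = 0 := by
  obtain ⟨r, rfl⟩ : ∃ r, f = C r :=
    ⟨_, totalDegree_eq_zero_iff_eq_C.1 (Nat.le_zero.1 hf.totalDegree_le)⟩
  rw [dunkl_apply, pderiv_C, Finset.sum_eq_zero fun j _ => divDiff_of_isHomogeneous_zero i j hf]
  ring

theorem dunkl_singularVector [Nonempty σ] {b : ℕ} (hb : 0 < b) (i l : σ) :
    dunkl ((b : ℂ) / Fintype.card σ) i (singularVector b l) = 0 := by
  have ha : (Fintype.card σ : ℂ) ≠ 0 := Nat.cast_ne_zero.2 Fintype.card_ne_zero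
  set c := (b : ℂ) / Fintype.card σ with hc
  have hsub : ∀ m j : σ, singularVector b m - singularVector b j = (X m - X j) *
      PowerSeries.coeff b (PowerSeries.X * (genSeries c m * geomSeries (X j))) := by
    intro m j
    rw [singularVector, singularVector, ← map_sub, ← hc, genSeries_sub_genSeries,
      PowerSeries.coeff_C_mul]
  rw [dunkl_apply]
  rcases eq_or_ne l i with rfl | hli
  · have hd : ∀ j, divDiff l j (singularVector b l) =
        PowerSeries.coeff b (PowerSeries.X * (genSeries c l * geomSeries (X j))) -
          if l = j then PowerSeries.coeff b (PowerSeries.X * (genSeries c l * geomSeries (X l)))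
          else 0 := by
      intro j
      split_ifs with h
      · rw [← h, divDiff_self, sub_self]
      · rw [sub_zero]
        apply divDiff_eq h
        rw [rename_singularVector, Equiv.swap_apply_left, hsub]
    have hp : pderiv l (singularVector b l) = C (1 - c) *
        PowerSeries.coeff b (PowerSeries.X * (genSeries c l * geomSeries (X l))) := by
      rw [singularVector, ← hc, ← coeff_pderivSeries, pderivSeries_genSeries_self, mul_assoc,
        PowerSeries.coeff_C_mul]
    rw [hp, Finset.sum_congr rfl fun j _ => hd j, Finset.sum_sub_distrib, Finset.sum_ite_eq,
      if_pos (Finset.mem_univ _)]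
    obtain ⟨n, rfl⟩ := Nat.exists_eq_add_one.2 hb
    simp only [PowerSeries.coeff_succ_X_mul]
    have h := congrArg (PowerSeries.coeff n) (X_mul_derivative_genSeries c l)
    have h1 : PowerSeries.coeff n (PowerSeries.X * PowerSeries.derivative _ (genSeries c l)) =
        C (n : ℂ) * PowerSeries.coeff n (genSeries c l) := by
      cases n with
      | zero => simp
      | succ n =>
        rw [PowerSeries.coeff_succ_X_mul, PowerSeries.coeff_derivative]
        push_cast
        simp only [map_add, map_natCast, map_one]
        ring
    have h2 : c * Fintype.card σ - 1 = n := by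
      rw [hc, div_mul_cancel₀ _ ha]
      push_cast
      ring
    rw [h1, h2, map_sub, map_add, PowerSeries.coeff_C_mul, PowerSeries.coeff_C_mul, map_sum] at h
    simp only [map_sub, map_one]
    linear_combination -h
  · have hd : ∀ j, divDiff i j (singularVector b l) =
        if l = j then -PowerSeries.coeff b (PowerSeries.X * (genSeries c l * geomSeries (X i)))
          else 0 := by
      intro j
      split_ifs with h
      · apply divDiff_eq (h ▸ hli.symm)
        rw [rename_singularVector, ← h, Equiv.swap_apply_right, hsub]
        ring
      · apply divDiff_of_rename_eq
        rw [rename_singularVector, Equiv.swap_apply_of_ne_of_ne hli h]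
    have hp : pderiv i (singularVector b l) = -C c *
        PowerSeries.coeff b (PowerSeries.X * (genSeries c l * geomSeries (X i))) := by
      rw [singularVector, ← hc, ← coeff_pderivSeries, pderivSeries_genSeries_of_ne c hli, mul_assoc,
        ← map_neg, PowerSeries.coeff_C_mul]
    rw [hp, Finset.sum_congr rfl fun j _ => hd j, Finset.sum_ite_eq, if_pos (Finset.mem_univ _)]
    ring

theorem dunkl_mem_singularIdeal [Nonempty σ] {b : ℕ} (hb : 0 < b) (i : σ) {f : MvPolynomial σ ℂ}
    (hf : f ∈ singularIdeal σ b) :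
    dunkl ((b : ℂ) / Fintype.card σ) i f ∈ singularIdeal σ b := by
  rw [singularIdeal] at hf
  induction hf using Submodule.span_induction with
  | mem x hx =>
    obtain ⟨l, rfl⟩ := hx
    rw [dunkl_singularVector hb]
    exact zero_mem _
  | zero => rw [map_zero]; exact zero_mem _
  | add x y _ _ hx hy => rw [map_add]; exact add_mem hx hy
  | smul h x hx ih =>
    rw [smul_eq_mul, dunkl_mul]
    refine sub_mem (add_mem (Ideal.mul_mem_left _ _ ih) (Ideal.mul_mem_left _ _ hx))
      (Ideal.mul_mem_left _ _ (Ideal.sum_mem _ fun j _ => Ideal.mul_mem_left _ _ ?_))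
    exact permStable_singularIdeal b _ x hx

end Dunkl

section DunklLaplacian

variable {σ : Type*} [DecidableEq σ] [Fintype σ]

/-- The effect of a Dunkl operator on a variable. -/
theorem dunkl_X_mul (c : ℂ) (i j : σ) (f : MvPolynomial σ ℂ) :
    dunkl c i (X j * f) = X j * dunkl c i f + C c * rename (Equiv.swap i j) f +
      if i = j then f - C c * ∑ m, rename (Equiv.swap j m) f else 0 := by
  rw [dunkl_mul, pderiv_X]
  simp only [divDiff_X, sub_mul, Finset.sum_sub_distrib, ite_mul, one_mul, zero_mul,
    Finset.sum_ite_eq', Finset.mem_univ, if_true]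
  rcases eq_or_ne i j with rfl | h
  · simp only [Pi.single_eq_same, if_true]
    ring
  · simp only [Pi.single_eq_of_ne' h, if_neg h, Finset.sum_const_zero]
    ring

/-- The sum of the Dunkl operators. -/
noncomputable def dunklSum (σ : Type*) [DecidableEq σ] [Fintype σ] (c : ℂ) :
    Module.End ℂ (MvPolynomial σ ℂ) :=
  ∑ i, dunkl c i

/-- The sum of the squares of the Dunkl operators, projected to the reflection representation. -/
noncomputable def dunklLaplacian (σ : Type*) [DecidableEq σ] [Fintype σ] (c : ℂ) :
    Module.End ℂ (MvPolynomial σ ℂ) :=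
  ∑ i, dunkl c i * dunkl c i - (Fintype.card σ : ℂ)⁻¹ • (dunklSum σ c * dunklSum σ c)

theorem dunklSum_apply (c : ℂ) (f : MvPolynomial σ ℂ) : dunklSum σ c f = ∑ i, dunkl c i f :=
  LinearMap.sum_apply _ _ _

theorem dunklLaplacian_apply (c : ℂ) (f : MvPolynomial σ ℂ) :
    dunklLaplacian σ c f = ∑ i, dunkl c i (dunkl c i f) -
      C (Fintype.card σ : ℂ)⁻¹ * dunklSum σ c (dunklSum σ c f) := by
  rw [dunklLaplacian, LinearMap.sub_apply, LinearMap.smul_apply, LinearMap.sum_apply, smul_eq_C_mul]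
  rfl

theorem dunklSum_X_mul (c : ℂ) (j : σ) (f : MvPolynomial σ ℂ) :
    dunklSum σ c (X j * f) = X j * dunklSum σ c f + f := by
  simp only [dunklSum_apply, dunkl_X_mul, Finset.sum_add_distrib, Finset.sum_ite_eq',
    Finset.mem_univ, if_true, Equiv.swap_comm j, ← Finset.mul_sum]
  ring

theorem sum_dunkl_dunkl_X_mul (c : ℂ) (j : σ) (f : MvPolynomial σ ℂ) :
    ∑ i, dunkl c i (dunkl c i (X j * f)) =
      X j * ∑ i, dunkl c i (dunkl c i f) + 2 * dunkl c j f := by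
  have h1 : ∀ i, dunkl c i (dunkl c i (X j * f)) =
      X j * dunkl c i (dunkl c i f) + (C c * dunkl c j (rename (Equiv.swap j i) f) +
        C c * rename (Equiv.swap j i) (dunkl c j f)) +
      if i = j then 2 * dunkl c j f - C c * ∑ m, dunkl c j (rename (Equiv.swap j m) f) -
        C c * ∑ m, rename (Equiv.swap j m) (dunkl c j f) else 0 := by
    intro i
    have hC : ∀ g, dunkl c i (C c * g) = C c * dunkl c i g := fun g => by
      rw [← smul_eq_C_mul, map_smul, smul_eq_C_mul]
    have h2 : dunkl c i (rename (Equiv.swap j i) f) = rename (Equiv.swap j i) (dunkl c j f) := by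
      rw [rename_dunkl, Equiv.swap_apply_left]
    have h3 : rename (Equiv.swap j i) (dunkl c i f) = dunkl c j (rename (Equiv.swap j i) f) := by
      rw [rename_dunkl, Equiv.swap_apply_right]
    rw [dunkl_X_mul, map_add, map_add, dunkl_X_mul, hC, apply_ite (dunkl c i), map_zero, map_sub,
      hC,
      map_sum, Equiv.swap_comm i j, h2, h3]
    rcases eq_or_ne i j with rfl | h
    · simp only [if_true]
      ring
    · simp only [if_neg h]
      ring
  simp only [h1, Finset.sum_add_distrib, Finset.sum_ite_eq', Finset.mem_univ, if_true,
    ← Finset.mul_sum]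
  ring

theorem dunklLaplacian_X_mul [Nonempty σ] (c : ℂ) (j : σ) (f : MvPolynomial σ ℂ) :
    dunklLaplacian σ c (X j * f) = X j * dunklLaplacian σ c f + 2 * dunkl c j f -
      C (2 * (Fintype.card σ : ℂ)⁻¹) * dunklSum σ c f := by
  rw [dunklLaplacian_apply, dunklLaplacian_apply, sum_dunkl_dunkl_X_mul, dunklSum_X_mul, map_add,
    dunklSum_X_mul, map_mul, map_ofNat]
  ring

theorem dunklLaplacian_varSum_mul [Nonempty σ] (c : ℂ) (f : MvPolynomial σ ℂ) :
    dunklLaplacian σ c (varSum σ * f) = varSum σ * dunklLaplacian σ c f := by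
  have ha : (Fintype.card σ : ℂ) ≠ 0 := Nat.cast_ne_zero.2 Fintype.card_ne_zero
  rw [varSum, Finset.sum_mul, map_sum, Finset.sum_mul]
  simp only [dunklLaplacian_X_mul, Finset.sum_sub_distrib, Finset.sum_add_distrib, Finset.sum_const,
    Finset.card_univ, nsmul_eq_mul, ← Finset.mul_sum, ← dunklSum_apply]
  rw [← mul_assoc, ← map_natCast C, ← C_mul, mul_left_comm, mul_inv_cancel₀ ha, mul_one, map_ofNat]
  ring

/-- The sum of the squares of the variables. -/
noncomputable def sqSum (σ : Type*) [Fintype σ] : MvPolynomial σ ℂ := ∑ i, X i ^ 2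

theorem two_mul_sum_X_mul_divDiff (f : MvPolynomial σ ℂ) :
    2 * ∑ j, ∑ m, X j * divDiff j m f = ∑ j, ∑ m, (f - rename (Equiv.swap j m) f) := by
  have h : ∑ j : σ, ∑ m : σ, X j * divDiff j m f = ∑ j : σ, ∑ m : σ, -(X m * divDiff j m f) := by
    rw [Finset.sum_comm]
    refine Finset.sum_congr rfl fun j _ => Finset.sum_congr rfl fun m _ => ?_
    rw [divDiff_swap j m, mul_neg]
  rw [two_mul]
  nth_rewrite 2 [h]
  simp only [← Finset.sum_add_distrib]
  refine Finset.sum_congr rfl fun j _ => Finset.sum_congr rfl fun m _ => ?_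
  rw [← mul_divDiff]
  ring

theorem sum_X_mul_dunkl (c : ℂ) (f : MvPolynomial σ ℂ) :
    2 * ∑ j, X j * dunkl c j f = 2 * ∑ j, X j * pderiv j f -
      C (c * Fintype.card σ ^ 2) * f + C c * ∑ j, ∑ m, rename (Equiv.swap j m) f := by
  have h := two_mul_sum_X_mul_divDiff f
  simp only [Finset.sum_sub_distrib, Finset.sum_const, Finset.card_univ, nsmul_eq_mul,
    ← Finset.mul_sum] at h
  have h1 : ∑ j, X j * dunkl c j f =
      ∑ j, X j * pderiv j f - C c * ∑ j, X j * ∑ m, divDiff j m f := by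
    rw [Finset.mul_sum, ← Finset.sum_sub_distrib]
    refine Finset.sum_congr rfl fun j _ => ?_
    rw [dunkl_apply]
    ring
  rw [h1, map_mul, map_pow, map_natCast]
  linear_combination -C c * h

theorem dunklLaplacian_sqSum_mul [Nonempty σ] (c : ℂ) (f : MvPolynomial σ ℂ) :
    dunklLaplacian σ c (sqSum σ * f) = sqSum σ * dunklLaplacian σ c f +
      4 * ∑ i, X i * pderiv i f -
        C (2 * (1 - Fintype.card σ) * (1 - c * Fintype.card σ)) * f -
        varSum σ * (C (4 * (Fintype.card σ : ℂ)⁻¹) * dunklSum σ c f) := by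
  have ha : (Fintype.card σ : ℂ) ≠ 0 := Nat.cast_ne_zero.2 Fintype.card_ne_zero
  have h1 : ∀ j, dunklLaplacian σ c (X j ^ 2 * f) = X j ^ 2 * dunklLaplacian σ c f +
      4 * (X j * dunkl c j f) + 2 * f + 2 * C c * f - 2 * C c * ∑ m, rename (Equiv.swap j m) f -
        C (4 * (Fintype.card σ : ℂ)⁻¹) * (X j * dunklSum σ c f) -
          C (2 * (Fintype.card σ : ℂ)⁻¹) * f := by
    intro j
    rw [sq, mul_assoc, dunklLaplacian_X_mul, dunklLaplacian_X_mul, dunklSum_X_mul, dunkl_X_mul,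
      if_pos rfl, Equiv.swap_self, Equiv.coe_refl, rename_id, AlgHom.id_apply]
    simp only [map_mul, map_ofNat]
    ring
  have h2 : (Fintype.card σ : MvPolynomial σ ℂ) * C (Fintype.card σ : ℂ)⁻¹ = 1 := by
    rw [← map_natCast C, ← C_mul, mul_inv_cancel₀ ha, C_1]
  rw [sqSum, Finset.sum_mul, map_sum]
  simp only [h1, Finset.sum_sub_distrib, Finset.sum_add_distrib, Finset.sum_const,
    Finset.card_univ, nsmul_eq_mul, ← Finset.mul_sum, ← Finset.sum_mul]
  rw [← varSum]
  have h3 := sum_X_mul_dunkl c f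
  simp only [map_mul, map_ofNat, map_sub, map_one, map_natCast, map_pow] at h3 ⊢
  linear_combination 2 * h3 - 2 * f * h2

theorem dunklLaplacian_mem_singularSumIdeal [Nonempty σ] {b : ℕ} (hb : 0 < b)
    {f : MvPolynomial σ ℂ} (hf : f ∈ singularSumIdeal σ b) :
    dunklLaplacian σ ((b : ℂ) / Fintype.card σ) f ∈ singularSumIdeal σ b := by
  obtain ⟨x, hx, y, hy, rfl⟩ := Submodule.mem_sup.1 hf
  obtain ⟨u, rfl⟩ := Ideal.mem_span_singleton'.1 hy
  have hY : ∀ g ∈ singularIdeal σ b,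
      dunklSum σ ((b : ℂ) / Fintype.card σ) g ∈ singularIdeal σ b := fun g hg => by
    rw [dunklSum_apply]
    exact Ideal.sum_mem _ fun i _ => dunkl_mem_singularIdeal hb i hg
  rw [map_add, mul_comm u, dunklLaplacian_varSum_mul]
  refine Submodule.add_mem_sup ?_ (Ideal.mul_mem_right _ _ (Ideal.mem_span_singleton_self _))
  rw [dunklLaplacian_apply]
  exact sub_mem (Ideal.sum_mem _ fun i _ =>
    dunkl_mem_singularIdeal hb i (dunkl_mem_singularIdeal hb i hx))
    (Ideal.mul_mem_left _ _ (hY _ (hY _ hx)))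

theorem isHomogeneous_dunklSum (c : ℂ) {f : MvPolynomial σ ℂ} {d : ℕ}
    (hf : f.IsHomogeneous (d + 1)) : (dunklSum σ c f).IsHomogeneous d := by
  rw [dunklSum_apply]
  exact IsHomogeneous.sum _ _ _ fun i _ => isHomogeneous_dunkl c i hf

theorem isHomogeneous_dunklLaplacian (c : ℂ) {f : MvPolynomial σ ℂ} {d : ℕ}
    (hf : f.IsHomogeneous (d + 2)) : (dunklLaplacian σ c f).IsHomogeneous d := by
  rw [dunklLaplacian_apply]
  refine (IsHomogeneous.sum _ _ _ fun i _ =>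
    isHomogeneous_dunkl c i (isHomogeneous_dunkl c i hf)).sub ?_
  simpa using (isHomogeneous_C σ _).mul (isHomogeneous_dunklSum c (isHomogeneous_dunklSum c hf))

theorem dunklLaplacian_of_lt_two (c : ℂ) {f : MvPolynomial σ ℂ} {d : ℕ} (hd : d < 2)
    (hf : f.IsHomogeneous d) : dunklLaplacian σ c f = 0 := by
  have h : ∀ i, (dunkl c i f).IsHomogeneous 0 := by
    intro i
    interval_cases d
    · rw [dunkl_of_isHomogeneous_zero c i hf]
      exact isHomogeneous_zero _ _ _
    · exact isHomogeneous_dunkl c i hf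
  rw [dunklLaplacian_apply]
  have h1 : dunklSum σ c (dunklSum σ c f) = 0 := by
    rw [dunklSum_apply]
    refine Finset.sum_eq_zero fun i _ => dunkl_of_isHomogeneous_zero c i ?_
    rw [dunklSum_apply]
    exact IsHomogeneous.sum _ _ _ fun i _ => h i
  rw [h1, mul_zero, sub_zero]
  exact Finset.sum_eq_zero fun i _ => dunkl_of_isHomogeneous_zero c i (h i)

theorem isHomogeneous_dunklLaplacian_pow (c : ℂ) {f : MvPolynomial σ ℂ} {d : ℕ}
    (hf : f.IsHomogeneous d) (n : ℕ) :
    ((dunklLaplacian σ c ^ n) f).IsHomogeneous (d - 2 * n) ∧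
      (d < 2 * n → (dunklLaplacian σ c ^ n) f = 0) := by
  induction n with
  | zero => exact ⟨by simpa using hf, fun h => absurd h (by omega)⟩
  | succ n ih =>
    rw [pow_succ', Module.End.mul_apply]
    by_cases h : 2 ≤ d - 2 * n
    · obtain ⟨e, he⟩ := Nat.exists_eq_add_of_le' h
      refine ⟨?_, fun h' => absurd h' (by omega)⟩
      rw [show d - 2 * (n + 1) = e by omega]
      exact isHomogeneous_dunklLaplacian c (he ▸ ih.1)
    · rw [dunklLaplacian_of_lt_two c (not_le.1 h) ih.1]
      exact ⟨isHomogeneous_zero _ _ _, fun _ => rfl⟩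

theorem sum_X_mul_pderiv_dunklLaplacian_pow (c : ℂ) {f : MvPolynomial σ ℂ} {d : ℕ}
    (hf : f.IsHomogeneous d) (n : ℕ) :
    ∑ i, X i * pderiv i ((dunklLaplacian σ c ^ n) f) =
      C ((d : ℂ) - 2 * n) * (dunklLaplacian σ c ^ n) f := by
  obtain ⟨h1, h2⟩ := isHomogeneous_dunklLaplacian_pow c hf n
  by_cases h : d < 2 * n
  · simp [h2 h]
  · rw [h1.sum_X_mul_pderiv, nsmul_eq_mul, ← map_natCast C, Nat.cast_sub (not_lt.1 h)]
    push_cast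
    rfl

/-- The commutator of powers of the Laplacian with multiplication by the sum of squares. -/
theorem dunklLaplacian_pow_sqSum_mul [Nonempty σ] {c N : ℂ}
    (hN : N = (1 - Fintype.card σ) * (1 - c * Fintype.card σ)) {f : MvPolynomial σ ℂ} {d : ℕ}
    (hf : f.IsHomogeneous d) (n : ℕ) :
    ∃ v, (dunklLaplacian σ c ^ (n + 1)) (sqSum σ * f) =
      sqSum σ * (dunklLaplacian σ c ^ (n + 1)) f +
        C ((n + 1) * (4 * d - 4 * n - 2 * N)) * (dunklLaplacian σ c ^ n) f + varSum σ * v := by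
  have hC : ∀ r g, dunklLaplacian σ c (C r * g) = C r * dunklLaplacian σ c g := fun r g => by
    rw [← smul_eq_C_mul, map_smul, smul_eq_C_mul]
  have step : ∀ n : ℕ, ∃ v, dunklLaplacian σ c (sqSum σ * (dunklLaplacian σ c ^ n) f) =
      sqSum σ * (dunklLaplacian σ c ^ (n + 1)) f +
        C (4 * (d - 2 * n) - 2 * N) * (dunklLaplacian σ c ^ n) f + varSum σ * v := fun n =>
    ⟨-(C (4 * (Fintype.card σ : ℂ)⁻¹) * dunklSum σ c ((dunklLaplacian σ c ^ n) f)), by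
      rw [dunklLaplacian_sqSum_mul, sum_X_mul_pderiv_dunklLaplacian_pow c hf, pow_succ',
        Module.End.mul_apply, mul_assoc 2, ← hN]
      simp only [map_mul, map_sub, map_ofNat]
      ring⟩
  induction n with
  | zero =>
    obtain ⟨v, hv⟩ := step 0
    refine ⟨v, ?_⟩
    simpa using hv
  | succ n ih =>
    obtain ⟨v, hv⟩ := ih
    obtain ⟨u, hu⟩ := step (n + 1)
    refine ⟨u + dunklLaplacian σ c v, ?_⟩
    rw [pow_succ', Module.End.mul_apply, hv, map_add, map_add, hu, dunklLaplacian_varSum_mul, hC,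
      ← Module.End.mul_apply (dunklLaplacian σ c) (dunklLaplacian σ c ^ n), ← pow_succ',
        ← pow_succ']
    simp only [map_mul, map_sub, map_add, map_ofNat, map_natCast, map_one]
    push_cast
    ring

theorem mem_of_sqSum_mul_mem [Nonempty σ] {b : ℕ} (hb : 0 < b) {f : MvPolynomial σ ℂ} {d : ℕ}
    (hf : f.IsHomogeneous d) (hd : 2 * d < (Fintype.card σ - 1) * (b - 1))
    (h : sqSum σ * f ∈ singularSumIdeal σ b) : f ∈ singularSumIdeal σ b := by
  have ha : (Fintype.card σ : ℂ) ≠ 0 := Nat.cast_ne_zero.2 Fintype.card_ne_zero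
  set c := (b : ℂ) / Fintype.card σ with hc
  have hpow : ∀ n, ∀ g ∈ singularSumIdeal σ b,
      (dunklLaplacian σ c ^ n) g ∈ singularSumIdeal σ b := by
    intro n
    induction n with
    | zero => exact fun g hg => hg
    | succ n ih =>
      intro g hg
      rw [pow_succ', Module.End.mul_apply]
      exact dunklLaplacian_mem_singularSumIdeal hb (ih g hg)
  have hs : varSum σ ∈ singularSumIdeal σ b :=
    Ideal.mem_sup_right (Ideal.mem_span_singleton_self _)
  have hN : ((((Fintype.card σ - 1) * (b - 1) : ℕ) : ℂ)) =
      (1 - Fintype.card σ) * (1 - c * Fintype.card σ) := by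
    rw [hc, div_mul_cancel₀ _ ha, Nat.cast_mul, Nat.cast_sub hb,
      Nat.cast_sub (Nat.one_le_iff_ne_zero.2 Fintype.card_ne_zero)]
    push_cast
    ring
  have down : ∀ n, (dunklLaplacian σ c ^ n) f ∈ singularSumIdeal σ b →
      f ∈ singularSumIdeal σ b := by
    intro n
    induction n with
    | zero => exact fun h => h
    | succ n ih =>
      intro hn
      apply ih
      obtain ⟨v, hv⟩ := dunklLaplacian_pow_sqSum_mul hN hf n
      set r : ℂ := ((n : ℂ) + 1) * (4 * d - 4 * n -
        2 * (((Fintype.card σ - 1) * (b - 1) : ℕ) : ℂ)) with hr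
      have hr0 : r ≠ 0 := by
        refine mul_ne_zero (by exact_mod_cast n.succ_ne_zero) (sub_ne_zero.2 fun h0 => ?_)
        rw [sub_eq_iff_eq_add] at h0
        have h1 : 4 * d = 2 * ((Fintype.card σ - 1) * (b - 1)) + 4 * n := by exact_mod_cast h0
        omega
      have hmem : C r * (dunklLaplacian σ c ^ n) f ∈ singularSumIdeal σ b := by
        have h1 := sub_mem (sub_mem (hpow (n + 1) _ h) (Ideal.mul_mem_left _ (sqSum σ) hn))
          (Ideal.mul_mem_right v _ hs)
        rwa [hv, sub_right_comm, add_sub_cancel_right, add_sub_cancel_left] at h1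
      have h2 := Ideal.mul_mem_left _ (C r⁻¹) hmem
      rwa [← mul_assoc, ← C_mul, inv_mul_cancel₀ hr0, C_1, one_mul] at h2
  refine down (d + 1) ?_
  rw [(isHomogeneous_dunklLaplacian_pow c hf (d + 1)).2 (by omega)]
  exact zero_mem _

end DunklLaplacian

section Lefschetz

variable {α β : Type*} [Fintype α] [DecidableEq α] [Fintype β]

theorem isoDim_le_isoDim_top (I : Ideal (MvPolynomial (α ⊕ β) ℂ)) (d : ℕ) :
    isoDim I d ≤ isoDim (⊤ : Ideal (MvPolynomial (α ⊕ β) ℂ)) d :=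
  Submodule.finrank_mono fun _ hp => ⟨⟨trivial, hp.1.2⟩, hp.2⟩

theorem coeff_isoHilb_nonneg (I : Ideal (MvPolynomial (α ⊕ β) ℂ)) (d : ℕ) :
    0 ≤ PowerSeries.coeff d (isoHilb I) := by
  rw [isoHilb, PowerSeries.coeff_mk]
  have := isoDim_le_isoDim_top I d
  omega

/-- If multiplication by an invariant of degree `e` is injective on the degree `d` part of a
quotient, then the isotypic dimension does not decrease from degree `d` to degree `d + e`. -/
theorem coeff_isoHilb_le_coeff_add {I : Ideal (MvPolynomial (α ⊕ β) ℂ)}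
    {f : MvPolynomial (α ⊕ β) ℂ} {e d : ℕ} (hf : f.IsHomogeneous e)
    (hfs : ∀ w : Equiv.Perm (α ⊕ β), rename w f = f)
    (hcol : ∀ u : MvPolynomial (α ⊕ β) ℂ, u.IsHomogeneous d → f * u ∈ I → u ∈ I) :
    PowerSeries.coeff d (isoHilb I) ≤ PowerSeries.coeff (d + e) (isoHilb I) := by
  set V := gradedPiece (⊤ : Ideal (MvPolynomial (α ⊕ β) ℂ)) d ⊓ isotypic α β with hV
  set W := gradedPiece (⊤ : Ideal (MvPolynomial (α ⊕ β) ℂ)) (d + e) ⊓ isotypic α β with hW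
  set m := LinearMap.mulLeft ℂ f
  have hsup : (gradedPiece I (d + e) ⊓ isotypic α β) ⊔ V.map m ≤ W := by
    refine sup_le (fun p hp => ⟨⟨trivial, hp.1.2⟩, hp.2⟩) ?_
    rintro _ ⟨u, hu, rfl⟩
    refine ⟨⟨trivial, ?_⟩, mul_mem_isotypic hfs hu.2⟩
    rw [add_comm]
    exact hf.mul hu.1.2
  have hinf : (gradedPiece I (d + e) ⊓ isotypic α β) ⊓ V.map m ≤
      (gradedPiece I d ⊓ isotypic α β).map m := by
    rintro _ ⟨hp, u, hu, rfl⟩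
    exact ⟨u, ⟨⟨hcol u hu.1.2 hp.1.1, hu.1.2⟩, hu.2⟩, rfl⟩
  have hker : V ⊓ LinearMap.ker m ≤ (gradedPiece I d ⊓ isotypic α β) ⊓ LinearMap.ker m := by
    rintro p ⟨hp, hm⟩
    have h0 : f * p = 0 := hm
    exact ⟨⟨⟨hcol p hp.1.2 (by rw [h0]; exact I.zero_mem), hp.1.2⟩, hp.2⟩, hm⟩
  have h1 := Submodule.finrank_sup_add_finrank_inf_eq (gradedPiece I (d + e) ⊓ isotypic α β)
    (V.map m)
  have h2 := finrank_map_add_finrank_inf_ker m V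
  have h3 := finrank_map_add_finrank_inf_ker m (gradedPiece I d ⊓ isotypic α β)
  have h4 := Submodule.finrank_mono hsup
  have h5 := Submodule.finrank_mono hinf
  have h6 := Submodule.finrank_mono hker
  rw [isoHilb, PowerSeries.coeff_mk, PowerSeries.coeff_mk]
  unfold isoDim
  rw [← hV, ← hW]
  omega

theorem isHomogeneous_sqSum (σ : Type*) [Fintype σ] : (sqSum σ).IsHomogeneous 2 :=
  IsHomogeneous.sum _ _ _ fun i _ => isHomogeneous_X_pow i 2

theorem rename_sqSum {σ : Type*} [Fintype σ] (w : Equiv.Perm σ) :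
    rename w (sqSum σ) = sqSum σ := by
  rw [sqSum, map_sum]
  exact Fintype.sum_equiv w _ _ fun i => by rw [map_pow, rename_X]

variable [DecidableEq β]

theorem coeff_isoHilb_singularSumIdeal_le [Nonempty (α ⊕ β)] {b d : ℕ} (hb : 0 < b)
    (hd : 2 * d < (Fintype.card (α ⊕ β) - 1) * (b - 1)) :
    PowerSeries.coeff d (isoHilb (singularSumIdeal (α ⊕ β) b)) ≤
      PowerSeries.coeff (d + 2) (isoHilb (singularSumIdeal (α ⊕ β) b)) :=
  coeff_isoHilb_le_coeff_add (isHomogeneous_sqSum _) rename_sqSum fun _ hu h =>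
    mem_of_sqSum_mul_mem hb hu hd h

end Lefschetz

section Palindromic

theorem coeff_qInt (n i : ℕ) : (qInt n).coeff i = if i < n then 1 else 0 := by
  simp [qInt, Polynomial.coeff_X_pow]

theorem natDegree_qInt_succ (n : ℕ) : (qInt (n + 1)).natDegree = n := by
  refine Polynomial.natDegree_eq_of_le_of_coeff_ne_zero ?_ (by simp [coeff_qInt])
  rw [Polynomial.natDegree_le_iff_coeff_eq_zero]
  intro N hN
  rw [coeff_qInt, if_neg (by omega)]

theorem reverse_qInt (n : ℕ) : (qInt n).reverse = qInt n := by
  cases n with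
  | zero => simp [qInt]
  | succ n =>
    ext i
    rw [Polynomial.coeff_reverse, natDegree_qInt_succ, coeff_qInt, coeff_qInt]
    by_cases h : i ≤ n
    · rw [Polynomial.revAt_le h, if_pos (by omega), if_pos (by omega)]
    · rw [Polynomial.revAt_eq_self_of_lt (by omega)]

theorem reverse_qFactorial (n : ℕ) : (qFactorial n).reverse = qFactorial n := by
  induction n with
  | zero => simpa [qFactorial] using Polynomial.reverse_C (1 : ℤ)
  | succ n ih => rw [qFactorial_succ, Polynomial.reverse_mul_of_domain, reverse_qInt, ih]

theorem natDegree_qFactorial (n : ℕ) : (qFactorial n).natDegree = n.choose 2 := by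
  induction n with
  | zero => simp [qFactorial]
  | succ n ih =>
    rw [qFactorial_succ, Polynomial.natDegree_mul (qInt_ne_zero n.succ_pos) (qFactorial_ne_zero n),
      natDegree_qInt_succ, ih, Nat.choose_succ_succ' n 1, Nat.choose_one_right]

variable {k l b : ℕ} {C : Polynomial ℤ}

theorem reverse_eq_of_qInt_mul_eq (hb : 0 < b)
    (hC : qInt (b + l) * C * (qFactorial k * qFactorial l * qFactorial (b - k)) =
      qFactorial (b + l)) : C.reverse = C := by
  have h := congrArg Polynomial.reverse hC
  simp only [Polynomial.reverse_mul_of_domain, reverse_qInt, reverse_qFactorial] at h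
  have h1 := mul_right_cancel₀ (mul_ne_zero (mul_ne_zero (qFactorial_ne_zero k)
    (qFactorial_ne_zero l)) (qFactorial_ne_zero (b - k))) (h.trans hC.symm)
  exact mul_left_cancel₀ (qInt_ne_zero (by omega)) h1

theorem natDegree_of_qInt_mul_eq (hb : 0 < b) (hk : k ≤ b)
    (hC : qInt (b + l) * C * (qFactorial k * qFactorial l * qFactorial (b - k)) =
      qFactorial (b + l)) : C.natDegree + 2 * k.choose 2 = (k + l - 1) * (b - 1) := by
  have hC0 : C ≠ 0 := by
    rintro rfl
    rw [mul_zero, zero_mul] at hC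
    exact qFactorial_ne_zero _ hC.symm
  obtain ⟨m, rfl⟩ := Nat.exists_eq_add_of_le hk
  obtain ⟨n, hn⟩ := Nat.exists_eq_add_one.2 hb
  have h := congrArg Polynomial.natDegree hC
  rw [Polynomial.natDegree_mul (mul_ne_zero (qInt_ne_zero (by omega)) hC0)
      (mul_ne_zero (mul_ne_zero (qFactorial_ne_zero _) (qFactorial_ne_zero _))
        (qFactorial_ne_zero _)), Polynomial.natDegree_mul (qInt_ne_zero (by omega)) hC0,
    Polynomial.natDegree_mul (mul_ne_zero (qFactorial_ne_zero _) (qFactorial_ne_zero _))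
        (qFactorial_ne_zero _), Polynomial.natDegree_mul (qFactorial_ne_zero _)
        (qFactorial_ne_zero _), natDegree_qFactorial, natDegree_qFactorial, natDegree_qFactorial,
    natDegree_qFactorial, Nat.add_sub_cancel_left,
    show k + m + l = (n + l) + 1 by omega, natDegree_qInt_succ] at h
  have hn' : (n : ℚ) = k + m - 1 := by
    rw [eq_sub_iff_add_eq]
    exact_mod_cast hn.symm
  have h' := congrArg (Nat.cast (R := ℚ)) h
  push_cast [Nat.cast_choose_two] at h'
  rw [hn, Nat.add_sub_cancel]
  rcases Nat.eq_zero_or_pos (k + l) with h0 | h0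
  · obtain ⟨rfl, rfl⟩ := Nat.add_eq_zero_iff.1 h0
    obtain rfl : n + 1 = m := by omega
    simp at h ⊢
    omega
  · obtain ⟨p, hp⟩ := Nat.exists_eq_add_one.2 h0
    have hp' : (p : ℚ) = k + l - 1 := by
      rw [eq_sub_iff_add_eq]
      exact_mod_cast hp.symm
    rw [hp, Nat.add_sub_cancel]
    apply Nat.cast_injective (R := ℚ)
    push_cast [Nat.cast_choose_two]
    rw [hn'] at h' ⊢
    rw [hp']
    linear_combination h'

/-- A sequence that increases up to some index and decreases afterwards is unimodal. -/
theorem UnimodalSeq.of_step {f : ℕ → ℤ} {m : ℕ} (h1 : ∀ i < m, f i ≤ f (i + 1))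
    (h2 : ∀ i, m ≤ i → f (i + 1) ≤ f i) : UnimodalSeq f := by
  refine ⟨m, fun i j hij hjm => ?_, fun i j hmi hij => ?_⟩
  · induction j, hij using Nat.le_induction with
    | base => exact le_rfl
    | succ j hij ih => exact (ih (by omega)).trans (h1 j (by omega))
  · induction j, hij using Nat.le_induction with
    | base => exact le_rfl
    | succ j hij ih => exact (h2 j (by omega)).trans ih

theorem parityUnimodal_of_reverse_eq (hrev : C.reverse = C) (h0 : ∀ i, 0 ≤ C.coeff i)
    (h : ∀ i, 2 * i < C.natDegree → C.coeff i ≤ C.coeff (i + 2)) : ParityUnimodal C := by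
  have hsymm : ∀ i ≤ C.natDegree, C.coeff (C.natDegree - i) = C.coeff i := by
    intro i hi
    rw [← Polynomial.revAt_le hi, ← Polynomial.coeff_reverse, hrev]
  have h' : ∀ i, C.natDegree ≤ 2 * i → C.coeff (i + 2) ≤ C.coeff i := by
    intro i hi
    by_cases hd : i + 2 ≤ C.natDegree
    · rw [← hsymm (i + 2) hd, ← hsymm i (by omega)]
      have := h (C.natDegree - (i + 2)) (by omega)
      rwa [show C.natDegree - (i + 2) + 2 = C.natDegree - i by omega] at this
    · rw [Polynomial.coeff_eq_zero_of_natDegree_lt (not_le.1 hd)]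
      exact h0 i
  exact ⟨.of_step (m := (C.natDegree + 3) / 4) (fun i hi => h (2 * i) (by omega))
      fun i hi => h' (2 * i) (by omega),
    .of_step (m := (C.natDegree + 1) / 4) (fun i hi => h (2 * i + 1) (by omega))
      fun i hi => h' (2 * i + 1) (by omega)⟩

end Palindromic

end QuotientOfPolynomialRing

theorem parity_unimodal_rational_qSchroeder
    (a b k : ℕ) (ha : 0 < a) (hb : 0 < b) (hk : k ≤ a) (hab : a < b)
    (hgcd : Nat.gcd a b = 1) (C : Polynomial ℤ)
    (hC : qInt (a + b - k) * C * (qFactorial k * qFactorial (a - k) * qFactorial (b - k)) =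
      qFactorial (a + b - k)) :
    ParityUnimodal C := by
  rw [show a + b - k = b + (a - k) by omega] at hC
  have hkb : k ≤ b := hk.trans hab.le
  have hcard : Fintype.card (Fin k ⊕ Fin (a - k)) = a := by
    rw [Fintype.card_sum, Fintype.card_fin, Fintype.card_fin]
    omega
  have : Nonempty (Fin k ⊕ Fin (a - k)) := Fintype.card_pos_iff.1 (by rw [hcard]; exact ha)
  have hH := isoHilb_singularSumIdeal (α := Fin k) (β := Fin (a - k)) hb (by rwa [hcard])
  rw [isoHilb_span_X_pow, Fintype.card_fin, Fintype.card_fin] at hH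
  have hiso := eq_X_pow_mul_of_one_sub_mul_eq hb hkb hC hH
  have hcoeff : ∀ i, PowerSeries.coeff (i + k.choose 2)
      (isoHilb (singularSumIdeal (Fin k ⊕ Fin (a - k)) b)) = C.coeff i := fun i => by
    rw [hiso, Polynomial.coeff_coe, Polynomial.coeff_X_pow_mul]
  have hdeg := natDegree_of_qInt_mul_eq hb hkb hC
  rw [Nat.add_sub_cancel' hk] at hdeg
  refine parityUnimodal_of_reverse_eq (reverse_eq_of_qInt_mul_eq hb hC)
    (fun i => hcoeff i ▸ coeff_isoHilb_nonneg _ _) fun i hi => ?_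
  rw [← hcoeff, ← hcoeff, add_right_comm]
  exact coeff_isoHilb_singularSumIdeal_le hb (by rw [hcard]; omega)
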